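/- Fix a ∈ ℤ with a ≥ −1, and let b = max{a+4, |a|+1}. Assume θ ∈ Ḣ^b_⋄ and f ∈ Ḣ^{b−1}_⋄. Then the operator Δ 𝕀_θ* 𝕀_θ is a homeomorphism of Ḣ^a_⋄; equivalently, the information operator 𝕀_θ* 𝕀_θ is a homeomorphism between Ḣ^a_⋄ and Ḣ^{a+2}_⋄ (it is injective, surjective, and continuous with continuous inverse). -/

import Mathlib

open MeasureTheory Set
open scoped BigOperators

noncomputable section

namespace NS2D

/-- Nonzero Fourier frequencies of the 2D torus `Ω = 𝕋²`. -/
def Freq : Type := {k : ℤ × ℤ // k ≠ 0}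

/-- Squared Euclidean modulus `|k|²` of a frequency. -/
def knormSq (k : Freq) : ℝ := (k.1.1 : ℝ) ^ 2 + (k.1.2 : ℝ) ^ 2

/-- Eigenvalue `λ_k = 4π²|k|²` of the periodic Laplacian `−Δ`. -/
def lam (k : Freq) : ℝ := 4 * Real.pi ^ 2 * knormSq k

/-- A divergence-free mean-zero vector field `u ∈ Ḣ_⋄` (or, more generally, an
element of the scale `Ḣ^α_⋄`) on the torus is represented by its Fourier
coefficients `c k` along the orthonormal basis
`e_k(x) = |k|⁻¹ (k₂, −k₁) exp(2πi k·x)` of divergence-free fields. -/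
abbrev Coef : Type := Freq → ℂ

/-- Negation of a frequency. -/
def fneg (k : Freq) : Freq := ⟨-k.1, neg_ne_zero.mpr k.2⟩

/-- The conjugacy condition expressing that the coefficients `c` represent a
real-valued vector field (note `e_{−k} = − conj e_k`). -/
def IsReal (c : Coef) : Prop := ∀ k, c (fneg k) = - (starRingEnd ℂ) (c k)

/-- Squared homogeneous Sobolev norm `‖·‖²_{Ḣ^α} = Σ_k λ_k^α |c k|²`. -/
def hSq (α : ℝ) (c : Coef) : ℝ := ∑' k, lam k ^ α * ‖c k‖ ^ 2

/-- Homogeneous Sobolev norm `‖·‖_{Ḣ^α}`. -/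
def hN (α : ℝ) (c : Coef) : ℝ := Real.sqrt (hSq α c)

/-- Finiteness of the `Ḣ^α`-norm. -/
def FinH (α : ℝ) (c : Coef) : Prop := Summable fun k => lam k ^ α * ‖c k‖ ^ 2

/-- Membership in `Ḣ^α_⋄` (real-valued field with finite `Ḣ^α`-norm). -/
def MemH (α : ℝ) (c : Coef) : Prop := IsReal c ∧ FinH α c

/-- Membership in `Ḣ^∞_⋄ = C^∞(Ω)² ∩ Ḣ_⋄`: all Sobolev norms are finite. -/
def MemHinf (c : Coef) : Prop := ∀ α : ℝ, MemH α c

/-- Real `Ḣ^α` inner product `⟨·,·⟩_{Ḣ^α}` (for real-valued fields). -/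
def hInner (α : ℝ) (c d : Coef) : ℝ := ∑' k, lam k ^ α * (c k * (starRingEnd ℂ) (d k)).re

/-- The `L²` inner product. -/
def innerC (c d : Coef) : ℂ := ∑' k, c k * (starRingEnd ℂ) (d k)

/-- The unit vector `(k₂, −k₁)/|k|` spanning the divergence-free direction at
frequency `k`. -/
def evec (k : Freq) : ℝ × ℝ :=
  ((k.1.2 : ℝ) / Real.sqrt (knormSq k), -((k.1.1 : ℝ)) / Real.sqrt (knormSq k))

/-- Euclidean dot product on `ℝ²`. -/
def dotR (a b : ℝ × ℝ) : ℝ := a.1 * b.1 + a.2 * b.2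

/-- A frequency as a real vector. -/
def fvec (k : Freq) : ℝ × ℝ := ((k.1.1 : ℝ), (k.1.2 : ℝ))

/-- Fourier coefficients (along the basis `e_k`) of the Leray-projected
transport nonlinearity `B[u,v] = P[(u·∇)v]`:
`(B[u,v])^(k) · ē_k = 2πi Σ_{m+n=k, n≠0} c_m d_n (e_m·n)(e_n·e_k)`. -/
def Bc (c d : Coef) : Coef := fun k =>
  (((2 * Real.pi : ℝ) : ℂ) * Complex.I) *
    ∑' m : Freq,
      if h : k.1 - m.1 ≠ 0 then
        c m * d ⟨k.1 - m.1, h⟩ *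
          (((dotR (evec m) (fvec ⟨k.1 - m.1, h⟩) *
            dotR (evec ⟨k.1 - m.1, h⟩) (evec k) : ℝ)) : ℂ)
      else 0

/-- The Laplacian `Δ` acting on the scale: `(Δu)^(k) = −λ_k û(k)`. -/
def lapC (c : Coef) : Coef := fun k => -((lam k : ℝ) : ℂ) * c k

/-- Continuity of a trajectory `t ↦ u(t)`, `t ∈ [0,T]`, for the `Ḣ^α`-norm:
`u ∈ C([0,T], Ḣ^α_⋄)`. -/
def ContH (α : ℝ) (T : ℝ) (u : ℝ → Coef) : Prop :=
  ∀ t ∈ Icc (0:ℝ) T, ∀ ε > 0, ∃ δ > 0, ∀ s ∈ Icc (0:ℝ) T,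
    |s - t| < δ → hN α (u s - u t) < ε

/-- Membership `u ∈ L²([0,T], Ḣ^α_⋄)`. -/
def MemL2H (α : ℝ) (T : ℝ) (u : ℝ → Coef) : Prop :=
  (∀ t ∈ Ioc (0:ℝ) T, MemH α (u t)) ∧
    IntegrableOn (fun t => hSq α (u t)) (Ioc 0 T)

/-- `u` is a strong solution on `[0,T]` of the (Leray-projected) periodic 2D
Navier–Stokes equations `du/dt + νAu + B[u,u] = f`, `u(0) = θ`, posed in `Ḣ_⋄`:
the Fourier coefficients satisfy the corresponding system of ODEs on `(0,T]`,
the trajectory is continuous into `Ḣ¹_⋄` (in particular at `t = 0`), and lies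
in `L²([0,T], Ḣ²_⋄)`. -/
structure IsNSSol (ν : ℝ) (f : Coef) (T : ℝ) (θ : Coef) (u : ℝ → Coef) : Prop where
  init : u 0 = θ
  real : ∀ t ∈ Icc (0:ℝ) T, IsReal (u t)
  deriv : ∀ (k : Freq), ∀ t ∈ Ioc (0:ℝ) T,
    HasDerivAt (fun s => u s k)
      (f k - ((ν * lam k : ℝ) : ℂ) * u t k - Bc (u t) (u t) k) t
  contH1 : ContH 1 T u
  memL2H2 : MemL2H 2 T u

/-- `U` solves the linear parabolic equation
`dU/dt − νΔU + B[u₀, U] + B[U, u₁] = g`, `U(0) = ξ`, on `[0,T]`. -/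
structure IsLinPSol (ν : ℝ) (u₀ u₁ : ℝ → Coef) (g : ℝ → Coef) (T : ℝ) (ξ : Coef)
    (U : ℝ → Coef) : Prop where
  init : U 0 = ξ
  real : ∀ t ∈ Icc (0:ℝ) T, IsReal (U t)
  deriv : ∀ (k : Freq), ∀ t ∈ Ioc (0:ℝ) T,
    HasDerivAt (fun s => U s k)
      (g t k - ((ν * lam k : ℝ) : ℂ) * U t k - Bc (u₀ t) (U t) k - Bc (U t) (u₁ t) k) t

/-- `U = 𝕀_θ[ξ]` solves the linearisation of Navier–Stokes along the
trajectory `u₀`: `dU/dt − νΔU + B[u₀,U] + B[U,u₀] = 0`, `U(0) = ξ`. -/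
def IsLinSol (ν : ℝ) (u₀ : ℝ → Coef) (T : ℝ) (ξ : Coef) (U : ℝ → Coef) : Prop :=
  IsLinPSol ν u₀ u₀ (fun _ => 0) T ξ U

/-- The heat semigroup `S_t = e^{νtΔ}` on the scale `Ḣ^α_⋄`. -/
def heatS (ν t : ℝ) (c : Coef) : Coef := fun k =>
  ((Real.exp (-(ν * lam k * t)) : ℝ) : ℂ) * c k

/-- Duhamel representation of the solution of the periodic heat equation
`du/dt − νΔu = g`, `u(0) = h`. -/
def heatSol (ν : ℝ) (g : ℝ → Coef) (h : Coef) : ℝ → Coef := fun t k =>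
  ((Real.exp (-(ν * lam k * t)) : ℝ) : ℂ) *
    (h k + ∫ s in (0:ℝ)..t, ((Real.exp (ν * lam k * s) : ℝ) : ℂ) * g s k)

/-- Real-linearity of a map on the coefficient space. -/
def IsLinMap (Λ : Coef → Coef) : Prop :=
  (∀ c d, Λ (c + d) = Λ c + Λ d) ∧ ∀ (r : ℝ) (c : Coef), Λ (r • c) = r • Λ c

/-- `Λ` defines a compact (linear) operator `Ḣ^α_⋄ → Ḣ^β_⋄`: it is linear,
maps `Ḣ^α_⋄` into `Ḣ^β_⋄`, and the image of the `Ḣ^α`-unit ball is totally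
bounded for the `Ḣ^β`-norm. -/
def IsCompactOp (α β : ℝ) (Λ : Coef → Coef) : Prop :=
  IsLinMap Λ ∧ (∀ c, MemH α c → MemH β (Λ c)) ∧
    ∀ ε > 0, ∃ S : Finset Coef, ∀ c, MemH α c → hN α c ≤ 1 →
      ∃ s ∈ S, hN β (Λ c - s) < ε

/-- The index `a* = |a|+1` if `|a| ≤ 1`, `a* = |a|` if `|a| ≥ 2`. -/
def astar (a : ℤ) : ℤ := if |a| ≤ 1 then |a| + 1 else |a|

/-- `i`-th component of the unit vector `evec k`. -/
def evecC (i : Fin 2) (k : Freq) : ℝ := if i = 0 then (evec k).1 else (evec k).2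

/-- Fourier coefficients (over all of `ℤ²`) of the scalar component `u_i` of a
divergence-free field with coefficients `c`. -/
def compCoef (i : Fin 2) (c : Coef) : ℤ × ℤ → ℂ := fun n =>
  if h : n ≠ 0 then c ⟨n, h⟩ * ((evecC i ⟨n, h⟩ : ℝ) : ℂ) else 0

/-- Convolution: Fourier coefficients of a pointwise product of two scalar
functions. -/
def convC (F G : ℤ × ℤ → ℂ) : ℤ × ℤ → ℂ := fun n => ∑' m : ℤ × ℤ, F m * G (n - m)

/-- Squared homogeneous Sobolev norm of a scalar function given by its Fourier
coefficients over `ℤ²`. -/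
def hSqScalar (α : ℝ) (F : ℤ × ℤ → ℂ) : ℝ := ∑' k : Freq, lam k ^ α * ‖F k.1‖ ^ 2

/-- `‖u vᵀ‖²_{Ḣ^α} = Σ_{i,j=1}^2 ‖u_i v_j‖²_{Ḣ^α}`. -/
def hSqMat (α : ℝ) (c d : Coef) : ℝ :=
  ∑ i : Fin 2, ∑ j : Fin 2, hSqScalar α (convC (compCoef i c) (compCoef j d))

/-- The character `exp(2πi k·x)`. -/
def efun (k : Freq) (x : ℝ × ℝ) : ℂ :=
  Complex.exp ((((2 * Real.pi : ℝ)) : ℂ) * Complex.I *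
    ((k.1.1 : ℂ) * (x.1 : ℂ) + (k.1.2 : ℂ) * (x.2 : ℂ)))

/-- Pointwise evaluation of the `i`-th component of the field. -/
def evalComp (i : Fin 2) (c : Coef) (x : ℝ × ℝ) : ℂ :=
  ∑' k, c k * ((evecC i k : ℝ) : ℂ) * efun k x

/-- Supremum norm (`C⁰`-norm) of the field. -/
def c0N (c : Coef) : ℝ := ⨆ x : ℝ × ℝ, max ‖evalComp 0 c x‖ ‖evalComp 1 c x‖

/-- The partial derivative `∂_j` acting on divergence-free fields. -/
def pderiv (j : Fin 2) (c : Coef) : Coef := fun k =>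
  (((2 * Real.pi : ℝ) : ℂ) * Complex.I) *
    (if j = 0 then ((k.1.1 : ℤ) : ℂ) else ((k.1.2 : ℤ) : ℂ)) * c k

/-- `C¹`-norm of the field. -/
def c1N (c : Coef) : ℝ := c0N c + c0N (pderiv 0 c) + c0N (pderiv 1 c)

/-- Norm of the multiplier space `B^ℓ`: `C^ℓ(Ω)²` for `ℓ ≤ 1` and `Ḣ^ℓ` for
`ℓ ≥ 2`. -/
def bN (ℓ : ℕ) (c : Coef) : ℝ :=
  if ℓ = 0 then c0N c else if ℓ = 1 then c1N c else hN (ℓ : ℝ) c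

end NS2D

/-!
Write `Λ = -Δ` and `M = 𝕀_θ*𝕀_θ`. Along two linearised trajectories `W`, `V` with initial data `ξ`,
`g`, the heat part of the equation gives `d/dt ⟨Λ⁻¹W, V⟩ = -2ν ⟨W, V⟩ + (terms of order -1 in
total)`. Integrating in time and using parabolic smoothing at `t = T` for the final pairing yields
`Λ⁻¹ - 2νM = K`, where `K` gains `δ` derivatives more than `Λ⁻¹` does. Reading the energy
inequality backwards in time bounds the initial datum by the trajectory: `‖ξ‖²_{Ḣ⁻¹} ≤ C ⟨Mξ, ξ⟩`.

This coercivity makes the Galerkin systems of `Mξ = g` solvable. Interpolating `Kξ` between a gain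
of `δ` derivatives and the coercivity bound, and absorbing, gives `‖ξ‖_{Ḣ^a} ≤ C ‖Mξ‖_{Ḣ^{a+2}}`,
uniformly for the Galerkin solutions as well. Since `K` gains derivatives, the Galerkin residuals
tend to zero, so that the approximations converge and `M` is onto.
-/

namespace NS2D

open Filter
open scoped ENNReal ComplexConjugate Topology

/-! ### Sums in `[0, ∞]` -/

lemma ennreal_two_mul_mul_le_add_sq (x y : ℝ≥0∞) : 2 * (x * y) ≤ x ^ 2 + y ^ 2 := by
  rcases eq_or_ne x ∞ with rfl | hx
  · simp
  rcases eq_or_ne y ∞ with rfl | hy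
  · simp
  lift x to NNReal using hx
  lift y to NNReal using hy
  norm_cast
  exact (mul_assoc 2 x y).symm.trans_le (two_mul_le_add_sq x y)

lemma ennreal_mul_le_add_sq (x y : ℝ≥0∞) : x * y ≤ x ^ 2 + y ^ 2 :=
  (le_mul_of_one_le_left' one_le_two).trans (ennreal_two_mul_mul_le_add_sq x y)

lemma ennreal_add_sq_le (x y : ℝ≥0∞) : (x + y) ^ 2 ≤ 2 * x ^ 2 + 2 * y ^ 2 :=
  calc (x + y) ^ 2 = x ^ 2 + y ^ 2 + 2 * (x * y) := by ring
    _ ≤ x ^ 2 + y ^ 2 + (x ^ 2 + y ^ 2) := by gcongr; exact ennreal_two_mul_mul_le_add_sq x y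
    _ = 2 * x ^ 2 + 2 * y ^ 2 := by ring

lemma enorm_add_sq_le {E : Type*} [TopologicalSpace E] [ESeminormedAddMonoid E] (x y : E) :
    ‖x + y‖ₑ ^ 2 ≤ 2 * ‖x‖ₑ ^ 2 + 2 * ‖y‖ₑ ^ 2 :=
  (pow_le_pow_left' (enorm_add_le x y) 2).trans (ennreal_add_sq_le _ _)

lemma ofReal_norm_sq {E : Type*} [SeminormedAddGroup E] (x : E) :
    ENNReal.ofReal (‖x‖ ^ 2) = ‖x‖ₑ ^ 2 := by
  rw [ENNReal.ofReal_pow (norm_nonneg x), ofReal_norm]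

lemma tsum_mul_sq_le {ι : Type*} (a b : ι → ℝ≥0∞) :
    (∑' i, a i * b i) ^ 2 ≤ (∑' i, a i ^ 2) * ∑' i, b i ^ 2 := by
  let _ : MeasurableSpace ι := ⊤
  have holder := ENNReal.lintegral_mul_le_Lp_mul_Lq Measure.count Real.HolderConjugate.two_two
    (f := a) (g := b) measurable_from_top.aemeasurable measurable_from_top.aemeasurable
  simp only [lintegral_count, Pi.mul_apply, ENNReal.rpow_two] at holder
  refine (pow_le_pow_left' holder 2).trans_eq ?_
  simp only [mul_pow, ← ENNReal.rpow_mul_natCast]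
  norm_num

lemma tsum_mul_sq_le_weighted {ι : Type*} (a b : ι → ℝ≥0∞) :
    (∑' i, a i * b i) ^ 2 ≤ (∑' i, a i) * ∑' i, a i * b i ^ 2 := by
  have sqrt_sq : ∀ i, (a i ^ (1 / 2 : ℝ)) ^ 2 = a i := fun i => by
    rw [← ENNReal.rpow_mul_natCast]; norm_num
  have := tsum_mul_sq_le (fun i => a i ^ (1 / 2 : ℝ)) (fun i => a i ^ (1 / 2 : ℝ) * b i)
  simpa only [mul_pow, sqrt_sq, ← mul_assoc, ← sq] using this

/-! ### Eigenvalues of the Laplacian -/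

instance : Countable Freq :=
  inferInstanceAs (Countable {k : ℤ × ℤ // k ≠ 0})

lemma one_le_knormSq (k : Freq) : 1 ≤ knormSq k := by
  obtain ⟨⟨x, y⟩, hk⟩ := k
  have hxy : 0 < x ^ 2 + y ^ 2 := by
    refine (by positivity : 0 ≤ x ^ 2 + y ^ 2).lt_of_ne' fun h => hk ?_
    rw [Prod.mk_eq_zero]
    constructor <;> nlinarith [sq_nonneg x, sq_nonneg y]
  simp only [knormSq]
  exact_mod_cast hxy

lemma four_le_four_mul_pi_sq : (4 : ℝ) ≤ 4 * Real.pi ^ 2 := by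
  nlinarith [Real.pi_gt_three]

lemma knormSq_le_lam (k : Freq) : knormSq k ≤ lam k := by
  have := four_le_four_mul_pi_sq
  have := one_le_knormSq k
  unfold lam
  nlinarith

lemma one_le_lam (k : Freq) : 1 ≤ lam k := (one_le_knormSq k).trans (knormSq_le_lam k)

lemma lam_pos (k : Freq) : 0 < lam k := one_pos.trans_le (one_le_lam k)

lemma lam_fneg (k : Freq) : lam (fneg k) = lam k := by
  simp [lam, knormSq, fneg]

lemma lam_rpow_nonneg (p : ℝ) (k : Freq) : 0 ≤ lam k ^ p := Real.rpow_nonneg (lam_pos k).le p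

lemma knormSq_le_add {m n k : Freq} (h : m.1 + n.1 = k.1) :
    knormSq k ≤ 2 * knormSq m + 2 * knormSq n := by
  simp only [knormSq, ← h, Prod.fst_add, Prod.snd_add, Int.cast_add]
  nlinarith [sq_nonneg ((m.1.1 : ℝ) - n.1.1), sq_nonneg ((m.1.2 : ℝ) - n.1.2)]

lemma lam_le_mul {m n k : Freq} (h : m.1 + n.1 = k.1) : lam k ≤ lam m * lam n := by
  have hm := one_le_knormSq m
  have hn := one_le_knormSq n
  have hk : knormSq k ≤ 4 * (knormSq m * knormSq n) := by nlinarith [knormSq_le_add h]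
  calc lam k ≤ 4 * Real.pi ^ 2 * (4 * (knormSq m * knormSq n)) := by unfold lam; gcongr
    _ ≤ 4 * Real.pi ^ 2 * (4 * Real.pi ^ 2 * (knormSq m * knormSq n)) := by
        gcongr; exact four_le_four_mul_pi_sq
    _ = lam m * lam n := by unfold lam; ring

lemma lam_le_four_mul_max {m n k : Freq} (h : m.1 + n.1 = k.1) :
    lam k ≤ 4 * max (lam m) (lam n) := by
  have hadd : lam k ≤ 2 * lam m + 2 * lam n := by
    unfold lam
    nlinarith [knormSq_le_add h, four_le_four_mul_pi_sq]
  linarith [le_max_left (lam m) (lam n), le_max_right (lam m) (lam n)]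

lemma norm_vec_sq_le_knormSq (k : Freq) : ‖(![k.1.1, k.1.2] : Fin 2 → ℤ)‖ ^ 2 ≤ knormSq k := by
  have hk := (zero_le_one.trans (one_le_knormSq k))
  rw [← Real.le_sqrt (norm_nonneg _) hk, pi_norm_le_iff_of_nonneg (Real.sqrt_nonneg _)]
  intro i
  rw [Int.norm_eq_abs]
  apply Real.abs_le_sqrt
  fin_cases i <;> simp [knormSq, sq_nonneg]

lemma summable_lam_rpow {q : ℝ} (hq : 1 < q) : Summable fun k : Freq => lam k ^ (-q) := by
  have hinj : Function.Injective fun k : Freq => (![k.1.1, k.1.2] : Fin 2 → ℤ) := fun k l h =>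
    Subtype.ext (Prod.ext (congrFun h 0) (congrFun h 1))
  have hsum := EisensteinSeries.summable_one_div_norm_rpow (k := 2 * q) (by linarith)
  refine Summable.of_nonneg_of_le (lam_rpow_nonneg _) (fun k => ?_) (hsum.comp_injective hinj)
  set x : Fin 2 → ℤ := ![k.1.1, k.1.2]
  have hx0 : 0 < ‖x‖ := norm_pos_iff.2 fun h0 =>
    k.2 (Prod.ext (congrFun h0 0) (congrFun h0 1))
  calc lam k ^ (-q) ≤ (‖x‖ ^ 2) ^ (-q) :=
        Real.rpow_le_rpow_of_nonpos (by positivity)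
          ((norm_vec_sq_le_knormSq k).trans (knormSq_le_lam k)) (by linarith)
    _ = ‖x‖ ^ (-(2 * q)) := by
        rw [← Real.rpow_natCast, ← Real.rpow_mul hx0.le]
        push_cast
        ring_nf

/-! ### Sobolev weights and norms with values in `[0, ∞]` -/

/-- The Sobolev weight `λ_k^p`, with values in `[0, ∞]` so that weighted sums need no summability
side conditions. -/
def lamPow (p : ℝ) (k : Freq) : ℝ≥0∞ := ENNReal.ofReal (lam k ^ p)

lemma lamPow_mul (p q : ℝ) (k : Freq) : lamPow p k * lamPow q k = lamPow (p + q) k := by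
  unfold lamPow
  rw [← ENNReal.ofReal_mul (lam_rpow_nonneg p k), Real.rpow_add (lam_pos k)]

lemma lamPow_zero (k : Freq) : lamPow 0 k = 1 := by simp [lamPow]

lemma lamPow_sq (p : ℝ) (k : Freq) : lamPow p k ^ 2 = lamPow (2 * p) k := by
  rw [sq, lamPow_mul, two_mul]

lemma lamPow_mono {p q : ℝ} (h : p ≤ q) (k : Freq) : lamPow p k ≤ lamPow q k :=
  ENNReal.ofReal_le_ofReal (Real.rpow_le_rpow_of_exponent_le (one_le_lam k) h)

lemma lamPow_ne_top (p : ℝ) (k : Freq) : lamPow p k ≠ ∞ := ENNReal.ofReal_ne_top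

lemma lamPow_ne_zero (p : ℝ) (k : Freq) : lamPow p k ≠ 0 :=
  (ENNReal.ofReal_pos.2 (Real.rpow_pos_of_pos (lam_pos k) p)).ne'

lemma lamPow_le_mul_of_nonneg {m n k : Freq} (h : m.1 + n.1 = k.1) {p : ℝ} (hp : 0 ≤ p) :
    lamPow p k ≤ lamPow p m * lamPow p n := by
  unfold lamPow
  rw [← ENNReal.ofReal_mul (lam_rpow_nonneg p m), ← Real.mul_rpow (lam_pos m).le (lam_pos n).le]
  exact ENNReal.ofReal_le_ofReal (Real.rpow_le_rpow (lam_pos k).le (lam_le_mul h) hp)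

lemma lamPow_le_mul {m n k : Freq} (h : m.1 + n.1 = k.1) (p : ℝ) :
    lamPow p k ≤ lamPow |p| m * lamPow p n := by
  rcases le_or_gt 0 p with hp | hp
  · rw [abs_of_nonneg hp]
    exact lamPow_le_mul_of_nonneg h hp
  · have h' : (fneg m).1 + k.1 = n.1 := by simp [fneg, ← h]
    have hn := lamPow_le_mul_of_nonneg h' (neg_nonneg.2 hp.le)
    have cancel : ∀ l, lamPow p l * lamPow (-p) l = 1 := fun l => by
      rw [lamPow_mul, add_neg_cancel, lamPow_zero]
    have hm : lamPow (-p) (fneg m) = lamPow (-p) m := by simp only [lamPow, lam_fneg]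
    rw [abs_of_neg hp]
    calc lamPow p k = lamPow p k * (lamPow p n * lamPow (-p) n) := by rw [cancel, mul_one]
      _ ≤ lamPow p k * (lamPow p n * (lamPow (-p) m * lamPow (-p) k)) := by
          rw [← hm]; gcongr
      _ = (lamPow p k * lamPow (-p) k) * (lamPow (-p) m * lamPow p n) := by ring
      _ = lamPow (-p) m * lamPow p n := by rw [cancel, one_mul]

lemma rpow_le_rpow_neg_mul_rpow_add {x y p q : ℝ} (hx : 0 < x) (hxy : x ≤ y) (hq : 0 ≤ q) :
    y ^ p ≤ x ^ (-q) * y ^ (p + q) := by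
  have hy := hx.trans_le hxy
  calc y ^ p = y ^ (-q) * y ^ (p + q) := by rw [← Real.rpow_add hy]; ring_nf
    _ ≤ x ^ (-q) * y ^ (p + q) := by
        gcongr ?_ * _
        exact Real.rpow_le_rpow_of_nonpos hx hxy (neg_nonpos.2 hq)

/-- The larger of the two frequencies carries all the derivatives, including `q` borrowed from the
smaller one. -/
lemma lamPow_le_add_mul {m n k : Freq} (h : m.1 + n.1 = k.1) {p q : ℝ} (hp : 0 ≤ p) (hq : 0 ≤ q) :
    lamPow p k ≤ ENNReal.ofReal (4 ^ p) *
      (lamPow (-q) m * lamPow (p + q) n + lamPow (p + q) m * lamPow (-q) n) := by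
  have hm := lam_pos m
  have hn := lam_pos n
  unfold lamPow
  rw [← ENNReal.ofReal_mul (by positivity), ← ENNReal.ofReal_mul (by positivity),
    ← ENNReal.ofReal_add (by positivity) (by positivity), ← ENNReal.ofReal_mul (by positivity)]
  refine ENNReal.ofReal_le_ofReal ?_
  calc lam k ^ p ≤ (4 * max (lam m) (lam n)) ^ p :=
        Real.rpow_le_rpow (lam_pos k).le (lam_le_four_mul_max h) hp
    _ = 4 ^ p * max (lam m) (lam n) ^ p := Real.mul_rpow (by norm_num) (by positivity)
    _ ≤ _ := by
        gcongr
        rcases le_total (lam m) (lam n) with hle | hle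
        · rw [max_eq_right hle]
          exact (rpow_le_rpow_neg_mul_rpow_add hm hle hq).trans
            (le_add_of_nonneg_right (by positivity))
        · rw [max_eq_left hle, mul_comm (lam m ^ (p + q))]
          exact (rpow_le_rpow_neg_mul_rpow_add hn hle hq).trans
            (le_add_of_nonneg_left (by positivity))

/-- The squared Sobolev norm `‖c‖²_{Ḣ^σ}` with values in `[0, ∞]`; unlike `hSq` it is `∞`, and not
`0`, when the defining series diverges. -/
def eHSq (σ : ℝ) (c : Coef) : ℝ≥0∞ := ∑' k, lamPow σ k * ‖c k‖ₑ ^ 2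

lemma eHSq_mono {p q : ℝ} (h : p ≤ q) (c : Coef) : eHSq p c ≤ eHSq q c :=
  ENNReal.tsum_le_tsum fun k => mul_le_mul_left (lamPow_mono h k) _

lemma lamPow_mul_enorm_sq_le_eHSq (σ : ℝ) (c : Coef) (k : Freq) :
    lamPow σ k * ‖c k‖ₑ ^ 2 ≤ eHSq σ c :=
  ENNReal.le_tsum k

lemma eHSq_eq_zero {σ : ℝ} {c : Coef} : eHSq σ c = 0 ↔ c = 0 := by
  simp [eHSq, lamPow_ne_zero, funext_iff]

lemma eHSq_add_le (σ : ℝ) (c d : Coef) : eHSq σ (c + d) ≤ 2 * eHSq σ c + 2 * eHSq σ d := by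
  unfold eHSq
  rw [← ENNReal.tsum_mul_left, ← ENNReal.tsum_mul_left, ← ENNReal.tsum_add]
  refine ENNReal.tsum_le_tsum fun k => ?_
  calc lamPow σ k * ‖(c + d) k‖ₑ ^ 2 ≤ lamPow σ k * (2 * ‖c k‖ₑ ^ 2 + 2 * ‖d k‖ₑ ^ 2) := by
        gcongr; exact enorm_add_sq_le _ _
    _ = _ := by ring

lemma eHSq_neg (σ : ℝ) (c : Coef) : eHSq σ (-c) = eHSq σ c := by simp [eHSq]

lemma eHSq_sub_le (σ : ℝ) (c d : Coef) : eHSq σ (c - d) ≤ 2 * eHSq σ c + 2 * eHSq σ d := by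
  rw [sub_eq_add_neg, ← eHSq_neg σ d]
  exact eHSq_add_le σ c (-d)

lemma lam_rpow_mul_norm_sq_nonneg (σ : ℝ) (c : Coef) (k : Freq) : 0 ≤ lam k ^ σ * ‖c k‖ ^ 2 :=
  mul_nonneg (lam_rpow_nonneg σ k) (by positivity)

lemma hSq_nonneg (σ : ℝ) (c : Coef) : 0 ≤ hSq σ c := tsum_nonneg (lam_rpow_mul_norm_sq_nonneg σ c)

lemma lamPow_mul_enorm_sq (σ : ℝ) (c : Coef) (k : Freq) :
    lamPow σ k * ‖c k‖ₑ ^ 2 = ENNReal.ofReal (lam k ^ σ * ‖c k‖ ^ 2) := by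
  rw [lamPow, ENNReal.ofReal_mul (lam_rpow_nonneg σ k), ofReal_norm_sq]

lemma eHSq_eq_ofReal {σ : ℝ} {c : Coef} (h : FinH σ c) : eHSq σ c = ENNReal.ofReal (hSq σ c) := by
  simp only [eHSq, hSq, lamPow_mul_enorm_sq]
  rw [ENNReal.ofReal_tsum_of_nonneg (lam_rpow_mul_norm_sq_nonneg σ c) h]

lemma eHSq_eq_ofReal_hN_sq {σ : ℝ} {c : Coef} (h : FinH σ c) :
    eHSq σ c = ENNReal.ofReal (hN σ c ^ 2) := by
  rw [eHSq_eq_ofReal h, hN, Real.sq_sqrt (hSq_nonneg σ c)]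

lemma finH_iff {σ : ℝ} {c : Coef} : FinH σ c ↔ eHSq σ c ≠ ∞ := by
  refine ⟨fun h => eHSq_eq_ofReal h ▸ ENNReal.ofReal_ne_top, fun h => ?_⟩
  simp only [eHSq, lamPow_mul_enorm_sq] at h
  refine (ENNReal.summable_toReal h).congr fun k => ?_
  rw [ENNReal.toReal_ofReal (lam_rpow_mul_norm_sq_nonneg σ c k)]

lemma FinH.mono {p q : ℝ} (h : p ≤ q) {c : Coef} (hc : FinH q c) : FinH p c :=
  finH_iff.2 (ne_top_of_le_ne_top (finH_iff.1 hc) (eHSq_mono h c))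

lemma FinH.sub {σ : ℝ} {c d : Coef} (hc : FinH σ c) (hd : FinH σ d) : FinH σ (c - d) := by
  rw [finH_iff] at *
  exact ne_top_of_le_ne_top (by finiteness) (eHSq_sub_le σ c d)

lemma IsReal.sub {c d : Coef} (hc : IsReal c) (hd : IsReal d) : IsReal (c - d) := fun k => by
  simp only [Pi.sub_apply, hc k, hd k, map_sub]
  ring

lemma MemH.sub {σ : ℝ} {c d : Coef} (hc : MemH σ c) (hd : MemH σ d) : MemH σ (c - d) :=
  ⟨hc.1.sub hd.1, hc.2.sub hd.2⟩

/-- The weighted Wiener norm `∑_k λ_k^p |c k|`. -/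
def wienerNorm (p : ℝ) (c : Coef) : ℝ≥0∞ := ∑' k, lamPow p k * ‖c k‖ₑ

lemma wienerNorm_mono {p q : ℝ} (h : p ≤ q) (c : Coef) : wienerNorm p c ≤ wienerNorm q c :=
  ENNReal.tsum_le_tsum fun k => mul_le_mul_left (lamPow_mono h k) _

/-- The spectral zeta value `∑_k λ_k^{-q}`, the squared constant of the embedding of `Ḣ^{2p+q}` into
the Wiener space of order `p`. -/
def spectralZeta (q : ℝ) : ℝ≥0∞ := ∑' k, lamPow (-q) k

lemma spectralZeta_ne_top {q : ℝ} (hq : 1 < q) : spectralZeta q ≠ ∞ := by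
  unfold spectralZeta lamPow
  rw [← ENNReal.ofReal_tsum_of_nonneg (lam_rpow_nonneg _) (summable_lam_rpow hq)]
  exact ENNReal.ofReal_ne_top

lemma wienerNorm_sq_le (p q : ℝ) (c : Coef) :
    wienerNorm p c ^ 2 ≤ spectralZeta q * eHSq (2 * p + q) c := by
  have split : ∀ k, lamPow (-q / 2) k * (lamPow (p + q / 2) k * ‖c k‖ₑ) = lamPow p k * ‖c k‖ₑ :=
    fun k => by rw [← mul_assoc, lamPow_mul]; ring_nf
  have cs := tsum_mul_sq_le (lamPow (-q / 2)) fun k => lamPow (p + q / 2) k * ‖c k‖ₑ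
  rwa [tsum_congr split, tsum_congr fun k => lamPow_sq (-q / 2) k,
    tsum_congr fun k => mul_pow (lamPow (p + q / 2) k) ‖c k‖ₑ 2,
    tsum_congr fun k => congrArg (· * _) (lamPow_sq (p + q / 2) k),
    show 2 * (-q / 2) = -q by ring, show 2 * (p + q / 2) = 2 * p + q by ring] at cs

/-! ### Bilinear estimates -/

/-- The ordered pairs of nonzero frequencies with sum `k`, which index the interactions contributing
to the `k`-th coefficient of a product. -/
abbrev FreqPair (k : Freq) : Type := {p : Freq × Freq // p.1.1 + p.2.1 = k.1}

/-- Convolution of `[0, ∞]`-valued functions on the nonzero frequencies. -/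
def freqConv (A B : Freq → ℝ≥0∞) (k : Freq) : ℝ≥0∞ := ∑' p : FreqPair k, A p.1.1 * B p.1.2

lemma freqConv_comm (A B : Freq → ℝ≥0∞) (k : Freq) : freqConv A B k = freqConv B A k := by
  let swap : FreqPair k ≃ FreqPair k :=
    (Equiv.prodComm Freq Freq).subtypeEquiv fun p => by simp [add_comm]
  unfold freqConv
  rw [← swap.tsum_eq]
  exact tsum_congr fun p => mul_comm _ _

lemma freqPair_fst_injective (k : Freq) : Function.Injective fun p : FreqPair k => p.1.1 :=
  fun p q h => Subtype.ext <| Prod.ext h <| Subtype.ext <|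
    add_left_cancel <| p.2.trans (q.2.symm.trans (by rw [show p.1.1 = q.1.1 from h]))

lemma freqPair_sigma_injective :
    Function.Injective fun p : Σ k : Freq, FreqPair k => p.2.1 := by
  rintro ⟨k, p⟩ ⟨l, q⟩ (h : p.1 = q.1)
  obtain rfl : k = l := Subtype.ext (p.2.symm.trans (h ▸ q.2))
  rw [Subtype.ext h]

lemma tsum_freqConv_sq_le (A B : Freq → ℝ≥0∞) :
    ∑' k, freqConv A B k ^ 2 ≤ (∑' k, A k) ^ 2 * ∑' k, B k ^ 2 := by
  calc ∑' k, freqConv A B k ^ 2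
      ≤ ∑' k, (∑' m, A m) * ∑' p : FreqPair k, A p.1.1 * B p.1.2 ^ 2 := by
        refine ENNReal.tsum_le_tsum fun k => (tsum_mul_sq_le_weighted _ _).trans ?_
        gcongr
        exact ENNReal.tsum_comp_le_tsum_of_injective (freqPair_fst_injective k) A
    _ = (∑' m, A m) * ∑' p : Σ k : Freq, FreqPair k, A p.2.1.1 * B p.2.1.2 ^ 2 := by
        rw [ENNReal.tsum_mul_left, ENNReal.tsum_sigma']
    _ ≤ (∑' m, A m) * ∑' p : Freq × Freq, A p.1 * B p.2 ^ 2 := by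
        gcongr
        exact ENNReal.tsum_comp_le_tsum_of_injective freqPair_sigma_injective
          fun p : Freq × Freq => A p.1 * B p.2 ^ 2
    _ = (∑' k, A k) ^ 2 * ∑' k, B k ^ 2 := by
        rw [ENNReal.tsum_prod']
        simp only [ENNReal.tsum_mul_left, ENNReal.tsum_mul_right]
        ring

lemma abs_dotR_le (a b : ℝ × ℝ) : |dotR a b| ≤ √(dotR a a) * √(dotR b b) := by
  unfold dotR
  rw [← Real.sqrt_mul (by nlinarith)]
  apply Real.abs_le_sqrt
  nlinarith [sq_nonneg (a.1 * b.2 - a.2 * b.1)]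

lemma dotR_fvec_self (k : Freq) : dotR (fvec k) (fvec k) = knormSq k := by
  simp only [dotR, fvec, knormSq]
  ring

lemma dotR_evec_self (k : Freq) : dotR (evec k) (evec k) = 1 := by
  have hk := zero_lt_one.trans_le (one_le_knormSq k)
  simp only [dotR, evec, div_mul_div_comm, Real.mul_self_sqrt hk.le, ← add_div]
  rw [div_eq_one_iff_eq hk.ne', knormSq]
  ring

lemma dotR_evec_fvec_eq {m n k : Freq} (h : m.1 + n.1 = k.1) :
    dotR (evec m) (fvec n) = dotR (evec m) (fvec k) := by
  simp only [dotR, fvec, evec, ← h, Prod.fst_add, Prod.snd_add, Int.cast_add]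
  ring

/-- Since `e_m ⟂ m`, the derivative in `(u · ∇)v` falls on the output frequency `k = m + n`. -/
lemma abs_interaction_le {m n k : Freq} (h : m.1 + n.1 = k.1) :
    |dotR (evec m) (fvec n) * dotR (evec n) (evec k)| ≤ √(knormSq k) := by
  have hmk := abs_dotR_le (evec m) (fvec k)
  have hnk := abs_dotR_le (evec n) (evec k)
  simp only [dotR_evec_self, dotR_fvec_self, Real.sqrt_one, one_mul] at hmk hnk
  rw [dotR_evec_fvec_eq h, abs_mul]
  exact (mul_le_of_le_one_right (abs_nonneg _) hnk).trans hmk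

lemma lamPow_half (k : Freq) :
    lamPow (1 / 2) k = ENNReal.ofReal (2 * Real.pi) * ENNReal.ofReal √(knormSq k) := by
  rw [lamPow, ← Real.sqrt_eq_rpow, lam, show 4 * Real.pi ^ 2 = (2 * Real.pi) ^ 2 by ring,
    Real.sqrt_mul (by positivity), Real.sqrt_sq (by positivity),
    ENNReal.ofReal_mul (by positivity)]

lemma enorm_Bc_le (c d : Coef) (k : Freq) :
    ‖Bc c d k‖ₑ ≤ lamPow (1 / 2) k * freqConv (‖c ·‖ₑ) (‖d ·‖ₑ) k := by
  have hconst : ‖((2 * Real.pi : ℝ) : ℂ) * Complex.I‖ₑ = ENNReal.ofReal (2 * Real.pi) := by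
    rw [← ofReal_norm, norm_mul, Complex.norm_I, mul_one, Complex.norm_real,
      Real.norm_of_nonneg (by positivity)]
  rw [Bc, enorm_mul, lamPow_half, mul_assoc, hconst, freqConv, ← ENNReal.tsum_mul_left]
  gcongr
  refine enorm_tsum_le_tsum_enorm.trans ?_
  rw [← (freqPair_fst_injective k).tsum_eq]
  · refine ENNReal.tsum_le_tsum fun ⟨(m, n), hmn⟩ => ?_
    have hn : k.1 - m.1 = n.1 := by rw [← hmn, add_sub_cancel_left]
    have hne : k.1 - m.1 ≠ 0 := hn ▸ n.2
    obtain rfl : (⟨k.1 - m.1, hne⟩ : Freq) = n := Subtype.ext hn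
    rw [dif_pos hne, enorm_mul, enorm_mul, mul_comm]
    gcongr
    rw [← ofReal_norm, Complex.norm_real]
    exact ENNReal.ofReal_le_ofReal (abs_interaction_le hmn)
  · intro m hm
    by_cases h : k.1 - m.1 ≠ 0
    · exact ⟨⟨(m, ⟨k.1 - m.1, h⟩), add_sub_cancel _ _⟩, rfl⟩
    · exact (hm (by simp only [dif_neg h, enorm_zero])).elim

lemma eHSq_Bc_le_tsum (σ : ℝ) (c d : Coef) :
    eHSq (σ - 1) (Bc c d) ≤ ∑' k, (lamPow (σ / 2) k * freqConv (‖c ·‖ₑ) (‖d ·‖ₑ) k) ^ 2 := by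
  refine ENNReal.tsum_le_tsum fun k => ?_
  calc lamPow (σ - 1) k * ‖Bc c d k‖ₑ ^ 2
      ≤ lamPow (σ - 1) k * (lamPow (1 / 2) k * freqConv (‖c ·‖ₑ) (‖d ·‖ₑ) k) ^ 2 := by
        gcongr; exact enorm_Bc_le c d k
    _ = _ := by
        rw [mul_pow, mul_pow, lamPow_sq, lamPow_sq, ← mul_assoc, lamPow_mul]
        ring_nf

lemma tsum_lamPow_mul_enorm_sq (σ : ℝ) (c : Coef) :
    ∑' k, (lamPow (σ / 2) k * ‖c k‖ₑ) ^ 2 = eHSq σ c := by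
  refine tsum_congr fun k => ?_
  rw [mul_pow, lamPow_sq, mul_div_cancel₀ _ two_ne_zero]

lemma tsum_lamPow_mul_freqConv_sq_le (σ : ℝ) (c d : Coef) :
    ∑' k, (lamPow (σ / 2) k * freqConv (‖c ·‖ₑ) (‖d ·‖ₑ) k) ^ 2 ≤
      wienerNorm |σ / 2| c ^ 2 * eHSq σ d := by
  rw [← tsum_lamPow_mul_enorm_sq]
  refine le_trans (ENNReal.tsum_le_tsum fun k => ?_) (tsum_freqConv_sq_le _ _)
  gcongr
  rw [freqConv, freqConv, ← ENNReal.tsum_mul_left]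
  refine ENNReal.tsum_le_tsum fun ⟨(m, n), hmn⟩ => ?_
  calc lamPow (σ / 2) k * (‖c m‖ₑ * ‖d n‖ₑ)
      ≤ lamPow |σ / 2| m * lamPow (σ / 2) n * (‖c m‖ₑ * ‖d n‖ₑ) := by
        gcongr; exact lamPow_le_mul hmn _
    _ = lamPow |σ / 2| m * ‖c m‖ₑ * (lamPow (σ / 2) n * ‖d n‖ₑ) := by ring

lemma eHSq_Bc_le_left (σ : ℝ) (c d : Coef) :
    eHSq (σ - 1) (Bc c d) ≤ wienerNorm |σ / 2| c ^ 2 * eHSq σ d :=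
  (eHSq_Bc_le_tsum σ c d).trans (tsum_lamPow_mul_freqConv_sq_le σ c d)

lemma eHSq_Bc_le_right (σ : ℝ) (c d : Coef) :
    eHSq (σ - 1) (Bc d c) ≤ wienerNorm |σ / 2| c ^ 2 * eHSq σ d := by
  refine (eHSq_Bc_le_tsum σ d c).trans ?_
  simp_rw [freqConv_comm (‖d ·‖ₑ)]
  exact tsum_lamPow_mul_freqConv_sq_le σ c d

lemma lamPow_mul_freqConv_self_le {p q : ℝ} (hp : 0 ≤ p) (hq : 0 ≤ q) (c : Coef) (k : Freq) :
    lamPow p k * freqConv (‖c ·‖ₑ) (‖c ·‖ₑ) k ≤ 2 * ENNReal.ofReal (4 ^ p) *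
      freqConv (fun m => lamPow (-q) m * ‖c m‖ₑ) (fun m => lamPow (p + q) m * ‖c m‖ₑ) k := by
  set A := fun m => lamPow (-q) m * ‖c m‖ₑ
  set B := fun m => lamPow (p + q) m * ‖c m‖ₑ
  calc lamPow p k * freqConv (‖c ·‖ₑ) (‖c ·‖ₑ) k
      ≤ ∑' r : FreqPair k, ENNReal.ofReal (4 ^ p) * (A r.1.1 * B r.1.2 + B r.1.1 * A r.1.2) := by
        rw [freqConv, ← ENNReal.tsum_mul_left]
        refine ENNReal.tsum_le_tsum fun ⟨(m, n), hmn⟩ => ?_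
        refine (mul_le_mul_left (lamPow_le_add_mul hmn hp hq) _).trans_eq ?_
        simp only [A, B]
        ring
    _ = ENNReal.ofReal (4 ^ p) * (freqConv A B k + freqConv B A k) := by
        rw [ENNReal.tsum_mul_left, ENNReal.tsum_add, freqConv, freqConv]
    _ = 2 * ENNReal.ofReal (4 ^ p) * freqConv A B k := by
        rw [freqConv_comm B A]
        ring

lemma eHSq_Bc_self_le {σ q : ℝ} (hσ : 0 ≤ σ) (hq : 0 ≤ q) (c : Coef) :
    eHSq (σ - 1) (Bc c c) ≤ (2 * ENNReal.ofReal (4 ^ (σ / 2))) ^ 2 *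
      (wienerNorm (-q) c ^ 2 * eHSq (σ + 2 * q) c) := by
  refine (eHSq_Bc_le_tsum σ c c).trans <| (ENNReal.tsum_le_tsum fun k => pow_le_pow_left'
    (lamPow_mul_freqConv_self_le (div_nonneg hσ zero_le_two) hq c k) 2).trans ?_
  simp only [mul_pow, ENNReal.tsum_mul_left]
  gcongr
  refine (tsum_freqConv_sq_le _ _).trans_eq ?_
  rw [← tsum_lamPow_mul_enorm_sq (σ + 2 * q), wienerNorm]
  ring_nf

/-! ### Energy estimates for the forced heat equation -/

section ScalarEnergy

variable {E : Type*} [NormedAddCommGroup E] [InnerProductSpace ℝ E] {w G : ℝ → E} {μ t₀ t₁ : ℝ}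

lemma abs_two_mul_inner_le (hμ : 0 < μ) (x y : E) :
    |2 * inner ℝ x y| ≤ μ * ‖x‖ ^ 2 + μ⁻¹ * ‖y‖ ^ 2 := by
  have square : 0 ≤ μ⁻¹ * (μ * ‖x‖ - ‖y‖) ^ 2 := by positivity
  have expand : μ⁻¹ * (μ * ‖x‖ - ‖y‖) ^ 2 =
      μ * ‖x‖ ^ 2 + μ⁻¹ * ‖y‖ ^ 2 - 2 * (‖x‖ * ‖y‖) := by
    field_simp
    ring
  rw [abs_mul, abs_two]
  linarith [abs_real_inner_le_norm x y]

lemma hasDerivAt_norm_sq {t : ℝ} (hw : HasDerivAt w (G t - μ • w t) t) :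
    HasDerivAt (fun s => ‖w s‖ ^ 2) (2 * inner ℝ (w t) (G t) - 2 * μ * ‖w t‖ ^ 2) t := by
  refine hw.norm_sq.congr_deriv ?_
  rw [inner_sub_right, inner_smul_right, real_inner_self_eq_norm_sq]
  ring

lemma norm_sq_add_integral_le (hμ : 0 < μ) (h01 : t₀ ≤ t₁) (hw : ContinuousOn w (Icc t₀ t₁))
    (hw' : ∀ t ∈ Ioo t₀ t₁, HasDerivAt w (G t - μ • w t) t)
    (hG : IntegrableOn (fun t => ‖G t‖ ^ 2) (Ioc t₀ t₁)) :
    ‖w t₁‖ ^ 2 + μ * ∫ t in Ioc t₀ t₁, ‖w t‖ ^ 2 ≤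
      ‖w t₀‖ ^ 2 + μ⁻¹ * ∫ t in Ioc t₀ t₁, ‖G t‖ ^ 2 := by
  have hw2c : ContinuousOn (fun t => ‖w t‖ ^ 2) (Icc t₀ t₁) := hw.norm.pow 2
  have hw2 := hw2c.integrableOn_compact (μ := volume) isCompact_Icc
  have hw2' := hw2.mono_set Ioc_subset_Icc_self
  have hG' := integrableOn_Icc_iff_integrableOn_Ioc (by finiteness) |>.2 hG
  have growth := intervalIntegral.sub_le_integral_of_hasDeriv_right_of_le h01 hw2c
    (fun t ht => (hasDerivAt_norm_sq (hw' t ht)).hasDerivWithinAt)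
    (φ := fun t => μ⁻¹ * ‖G t‖ ^ 2 - μ * ‖w t‖ ^ 2)
    (Integrable.sub' (hG'.const_mul μ⁻¹) (hw2.const_mul μ))
    (fun t _ => by linarith [(abs_le.1 (abs_two_mul_inner_le hμ (w t) (G t))).2])
  rw [intervalIntegral.integral_of_le h01,
    integral_sub (hG.const_mul _) (hw2'.const_mul _), integral_const_mul,
    integral_const_mul] at growth
  linarith

lemma norm_sq_le_add_integral (hμ : 0 < μ) (h01 : t₀ ≤ t₁) (hw : ContinuousOn w (Icc t₀ t₁))
    (hw' : ∀ t ∈ Ioo t₀ t₁, HasDerivAt w (G t - μ • w t) t)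
    (hG : IntegrableOn (fun t => ‖G t‖ ^ 2) (Ioc t₀ t₁)) :
    ‖w t₀‖ ^ 2 ≤ ‖w t₁‖ ^ 2 + (3 * μ * (∫ t in Ioc t₀ t₁, ‖w t‖ ^ 2) +
      μ⁻¹ * ∫ t in Ioc t₀ t₁, ‖G t‖ ^ 2) := by
  have hw2c : ContinuousOn (fun t => ‖w t‖ ^ 2) (Icc t₀ t₁) := hw.norm.pow 2
  have hw2 := hw2c.integrableOn_compact (μ := volume) isCompact_Icc
  have hw2' := hw2.mono_set Ioc_subset_Icc_self
  have hG' := integrableOn_Icc_iff_integrableOn_Ioc (by finiteness) |>.2 hG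
  have decay := intervalIntegral.integral_le_sub_of_hasDeriv_right_of_le h01 hw2c
    (fun t ht => (hasDerivAt_norm_sq (hw' t ht)).hasDerivWithinAt)
    (φ := fun t => -(3 * μ * ‖w t‖ ^ 2 + μ⁻¹ * ‖G t‖ ^ 2))
    (Integrable.fun_neg (Integrable.fun_add (hw2.const_mul (3 * μ)) (hG'.const_mul μ⁻¹)))
    (fun t _ => by linarith [(abs_le.1 (abs_two_mul_inner_le hμ (w t) (G t))).1])
  rw [intervalIntegral.integral_of_le h01, integral_neg,
    integral_add (hw2'.const_mul _) (hG.const_mul _), integral_const_mul,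
    integral_const_mul] at decay
  linarith

end ScalarEnergy

lemma lintegral_enorm_sq_eq_ofReal {α E : Type*} [MeasurableSpace α] {μ : Measure α}
    [NormedAddCommGroup E] {G : α → E} (hG : Integrable (fun t => ‖G t‖ ^ 2) μ) :
    ∫⁻ t, ‖G t‖ₑ ^ 2 ∂μ = ENNReal.ofReal (∫ t, ‖G t‖ ^ 2 ∂μ) := by
  rw [ofReal_integral_eq_lintegral_ofReal hG (ae_of_all _ fun t => by positivity)]
  simp only [ofReal_norm_sq]

lemma integrable_norm_sq_of_lintegral_ne_top {α E : Type*} [MeasurableSpace α] {μ : Measure α}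
    [NormedAddCommGroup E] {G : α → E} (hm : AEStronglyMeasurable G μ)
    (hfin : ∫⁻ t, ‖G t‖ₑ ^ 2 ∂μ ≠ ∞) : Integrable (fun t => ‖G t‖ ^ 2) μ := by
  refine ⟨hm.norm.pow 2, ?_⟩
  simpa [hasFiniteIntegral_iff_enorm] using hfin.lt_top

/-- `W` solves the heat equation `dW/dt − νΔW = N` on `(0, T]`, coefficient by coefficient, and each
coefficient is continuous up to `t = 0`. -/
structure IsHeatSol (ν T : ℝ) (W N : ℝ → Coef) : Prop where
  continuousOn : ∀ k, ContinuousOn (fun t => W t k) (Icc 0 T)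
  hasDerivAt : ∀ k, ∀ t ∈ Ioc 0 T, HasDerivAt (fun s => W s k) (N t k - (ν * lam k) • W t k) t

lemma lintegral_eHSq {s : Set ℝ} {X : ℝ → Coef}
    (hX : ∀ k, AEStronglyMeasurable (fun t => X t k) (volume.restrict s)) (σ : ℝ) :
    ∫⁻ t in s, eHSq σ (X t) = ∑' k, lamPow σ k * ∫⁻ t in s, ‖X t k‖ₑ ^ 2 := by
  unfold eHSq
  rw [lintegral_tsum fun k => ((hX k).enorm.pow_const 2).const_mul _]
  exact tsum_congr fun k => lintegral_const_mul' _ _ (lamPow_ne_top σ k)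

lemma lamPow_mul_ofReal_mul_lam {ν : ℝ} (hν : 0 ≤ ν) (σ : ℝ) (k : Freq) :
    lamPow σ k * ENNReal.ofReal (ν * lam k) = ENNReal.ofReal ν * lamPow (σ + 1) k := by
  rw [ENNReal.ofReal_mul hν, ← lamPow_mul, lamPow, lamPow, Real.rpow_one]
  ring

lemma lamPow_mul_ofReal_mul_lam_inv {ν : ℝ} (hν : 0 ≤ ν) (σ : ℝ) (k : Freq) :
    lamPow σ k * ENNReal.ofReal (ν * lam k)⁻¹ = ENNReal.ofReal ν⁻¹ * lamPow (σ - 1) k := by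
  rw [mul_inv, ENNReal.ofReal_mul (by positivity), sub_eq_add_neg, ← lamPow_mul, lamPow, lamPow,
    Real.rpow_neg_one]
  ring

namespace IsHeatSol

variable {ν T : ℝ} {W N : ℝ → Coef} {t₀ t₁ : ℝ}

lemma aestronglyMeasurable (h : IsHeatSol ν T W N) (h0 : 0 ≤ t₀) (h1 : t₁ ≤ T) (k : Freq) :
    AEStronglyMeasurable (fun t => W t k) (volume.restrict (Ioc t₀ t₁)) :=
  ((h.continuousOn k).mono
    (Ioc_subset_Icc_self.trans (Icc_subset_Icc h0 h1))).aestronglyMeasurable measurableSet_Ioc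

lemma aestronglyMeasurable_source (h : IsHeatSol ν T W N) (h0 : 0 ≤ t₀) (h1 : t₁ ≤ T) (k : Freq) :
    AEStronglyMeasurable (fun t => N t k) (volume.restrict (Ioc t₀ t₁)) := by
  have hsum : AEStronglyMeasurable (fun t => deriv (fun s => W s k) t + (ν * lam k) • W t k)
      (volume.restrict (Ioc t₀ t₁)) :=
    (measurable_deriv _).aestronglyMeasurable.add
      ((h.aestronglyMeasurable h0 h1 k).const_smul (ν * lam k))
  refine hsum.congr ?_
  filter_upwards [ae_restrict_mem measurableSet_Ioc] with t ht
  rw [(h.hasDerivAt k t (Ioc_subset_Ioc h0 h1 ht)).deriv, sub_add_cancel]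

lemma lintegral_eHSq_eq (h : IsHeatSol ν T W N) (h0 : 0 ≤ t₀) (h1 : t₁ ≤ T) (σ : ℝ) :
    ∫⁻ t in Ioc t₀ t₁, eHSq σ (W t) = ∑' k, lamPow σ k * ∫⁻ t in Ioc t₀ t₁, ‖W t k‖ₑ ^ 2 :=
  lintegral_eHSq (h.aestronglyMeasurable h0 h1) σ

lemma lintegral_eHSq_source_eq (h : IsHeatSol ν T W N) (h0 : 0 ≤ t₀) (h1 : t₁ ≤ T) (σ : ℝ) :
    ∫⁻ t in Ioc t₀ t₁, eHSq σ (N t) = ∑' k, lamPow σ k * ∫⁻ t in Ioc t₀ t₁, ‖N t k‖ₑ ^ 2 :=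
  lintegral_eHSq (h.aestronglyMeasurable_source h0 h1) σ

lemma coeff_energy (h : IsHeatSol ν T W N) (hν : 0 < ν) (h0 : 0 ≤ t₀) (h01 : t₀ ≤ t₁)
    (h1 : t₁ ≤ T) (k : Freq) :
    ‖W t₁ k‖ₑ ^ 2 + ENNReal.ofReal (ν * lam k) * ∫⁻ t in Ioc t₀ t₁, ‖W t k‖ₑ ^ 2 ≤
      ‖W t₀ k‖ₑ ^ 2 + ENNReal.ofReal (ν * lam k)⁻¹ * ∫⁻ t in Ioc t₀ t₁, ‖N t k‖ₑ ^ 2 ∧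
    ‖W t₀ k‖ₑ ^ 2 ≤ ‖W t₁ k‖ₑ ^ 2 +
      (ENNReal.ofReal (3 * (ν * lam k)) * (∫⁻ t in Ioc t₀ t₁, ‖W t k‖ₑ ^ 2) +
        ENNReal.ofReal (ν * lam k)⁻¹ * ∫⁻ t in Ioc t₀ t₁, ‖N t k‖ₑ ^ 2) := by
  have hμ : 0 < ν * lam k := mul_pos hν (lam_pos k)
  by_cases hfin : ∫⁻ t in Ioc t₀ t₁, ‖N t k‖ₑ ^ 2 = ∞
  · have hμ' : ENNReal.ofReal (ν * lam k)⁻¹ ≠ 0 := (ENNReal.ofReal_pos.2 (inv_pos.2 hμ)).ne'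
    rw [hfin, ENNReal.mul_top hμ']
    simp only [add_top, le_top, and_self]
  have hW : ContinuousOn (fun t => W t k) (Icc t₀ t₁) :=
    (h.continuousOn k).mono (Icc_subset_Icc h0 h1)
  have hW' := fun t (ht : t ∈ Ioo t₀ t₁) =>
    h.hasDerivAt k t (Ioc_subset_Ioc h0 h1 (Ioo_subset_Ioc_self ht))
  have hN := integrable_norm_sq_of_lintegral_ne_top (h.aestronglyMeasurable_source h0 h1 k) hfin
  have hW2 : IntegrableOn (fun t => ‖W t k‖ ^ 2) (Ioc t₀ t₁) :=
    ((hW.norm.pow 2).integrableOn_compact isCompact_Icc).mono_set Ioc_subset_Icc_self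
  have : 0 ≤ ∫ t in Ioc t₀ t₁, ‖W t k‖ ^ 2 := integral_nonneg fun t => by positivity
  have : 0 ≤ ∫ t in Ioc t₀ t₁, ‖N t k‖ ^ 2 := integral_nonneg fun t => by positivity
  have forward := norm_sq_add_integral_le hμ h01 hW hW' hN
  have backward := norm_sq_le_add_integral hμ h01 hW hW' hN
  generalize ν * lam k = μ at hμ forward backward ⊢
  rw [lintegral_enorm_sq_eq_ofReal hN, lintegral_enorm_sq_eq_ofReal hW2, ← ofReal_norm_sq,
    ← ofReal_norm_sq]
  constructor <;> repeat rw [← ENNReal.ofReal_mul (by positivity)]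
  all_goals repeat rw [← ENNReal.ofReal_add (by positivity) (by positivity)]
  exacts [ENNReal.ofReal_le_ofReal forward, ENNReal.ofReal_le_ofReal backward]

lemma energy_le (h : IsHeatSol ν T W N) (hν : 0 < ν) (σ : ℝ) (h0 : 0 ≤ t₀) (h01 : t₀ ≤ t₁)
    (h1 : t₁ ≤ T) :
    eHSq σ (W t₁) + ENNReal.ofReal ν * ∫⁻ t in Ioc t₀ t₁, eHSq (σ + 1) (W t) ≤
      eHSq σ (W t₀) + ENNReal.ofReal ν⁻¹ * ∫⁻ t in Ioc t₀ t₁, eHSq (σ - 1) (N t) := by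
  rw [h.lintegral_eHSq_eq h0 h1, h.lintegral_eHSq_source_eq h0 h1, ← ENNReal.tsum_mul_left,
    ← ENNReal.tsum_mul_left, eHSq, eHSq, ← ENNReal.tsum_add, ← ENNReal.tsum_add]
  refine ENNReal.tsum_le_tsum fun k => ?_
  have := mul_le_mul_right (h.coeff_energy hν h0 h01 h1 k).1 (lamPow σ k)
  rwa [mul_add, mul_add, ← mul_assoc, ← mul_assoc, lamPow_mul_ofReal_mul_lam hν.le,
    lamPow_mul_ofReal_mul_lam_inv hν.le, mul_assoc, mul_assoc] at this

/-- This is what makes the initial datum recoverable from the trajectory. -/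
lemma energy_le_backward (h : IsHeatSol ν T W N) (hν : 0 < ν) (σ : ℝ) (h0 : 0 ≤ t₀) (h01 : t₀ ≤ t₁)
    (h1 : t₁ ≤ T) :
    eHSq σ (W t₀) ≤ eHSq σ (W t₁) +
      (3 * ENNReal.ofReal ν * (∫⁻ t in Ioc t₀ t₁, eHSq (σ + 1) (W t)) +
        ENNReal.ofReal ν⁻¹ * ∫⁻ t in Ioc t₀ t₁, eHSq (σ - 1) (N t)) := by
  rw [h.lintegral_eHSq_eq h0 h1, h.lintegral_eHSq_source_eq h0 h1, ← ENNReal.tsum_mul_left,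
    ← ENNReal.tsum_mul_left, eHSq, eHSq, ← ENNReal.tsum_add, ← ENNReal.tsum_add]
  refine ENNReal.tsum_le_tsum fun k => ?_
  have := mul_le_mul_right (h.coeff_energy hν h0 h01 h1 k).2 (lamPow σ k)
  rw [ENNReal.ofReal_mul (by norm_num), ENNReal.ofReal_ofNat] at this
  calc lamPow σ k * ‖W t₀ k‖ₑ ^ 2
      ≤ _ := this
    _ = lamPow σ k * ‖W t₁ k‖ₑ ^ 2 +
        (3 * (lamPow σ k * ENNReal.ofReal (ν * lam k)) * (∫⁻ t in Ioc t₀ t₁, ‖W t k‖ₑ ^ 2) +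
          lamPow σ k * ENNReal.ofReal (ν * lam k)⁻¹ * ∫⁻ t in Ioc t₀ t₁, ‖N t k‖ₑ ^ 2) := by ring
    _ = _ := by
        rw [lamPow_mul_ofReal_mul_lam hν.le, lamPow_mul_ofReal_mul_lam_inv hν.le]
        ring

end IsHeatSol

/-! ### Grönwall's inequality -/

lemma le_two_mul_of_le_add_half {x y : ℝ≥0∞} (hx : x ≠ ∞) (h : x ≤ y + 2⁻¹ * x) : x ≤ 2 * y := by
  have halves : x = 2⁻¹ * x + 2⁻¹ * x := by
    rw [← add_mul, ENNReal.inv_two_add_inv_two, one_mul]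
  have half_le : 2⁻¹ * x ≤ y := by
    nth_rewrite 1 [halves] at h
    exact (ENNReal.add_le_add_iff_right (by finiteness)).1 h
  calc x = 2⁻¹ * x + 2⁻¹ * x := halves
    _ ≤ y + y := add_le_add half_le half_le
    _ = 2 * y := (two_mul y).symm

lemma ofReal_exp_mul_ofReal_exp_neg (x : ℝ) :
    ENNReal.ofReal (Real.exp x) * ENNReal.ofReal (Real.exp (-x)) = 1 := by
  rw [← ENNReal.ofReal_mul (Real.exp_pos _).le, ← Real.exp_add, add_neg_cancel, Real.exp_zero,
    ENNReal.ofReal_one]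

lemma ofReal_exp_neg_le_one {x : ℝ} (hx : 0 ≤ x) : ENNReal.ofReal (Real.exp (-x)) ≤ 1 :=
  ENNReal.ofReal_le_one.2 (Real.exp_le_one_iff.2 (neg_nonpos.2 hx))

lemma lintegral_exp_mul_le {κ t : ℝ} (hκ : 0 < κ) (ht : 0 ≤ t) :
    ∫⁻ s in Ioc 0 t, ENNReal.ofReal (Real.exp (κ * s)) ≤
      ENNReal.ofReal κ⁻¹ * ENNReal.ofReal (Real.exp (κ * t)) := by
  have hc : Continuous fun s : ℝ => Real.exp (κ * s) := by fun_prop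
  rw [← ofReal_integral_eq_lintegral_ofReal
    (hc.integrableOn_Icc.mono_set Ioc_subset_Icc_self) (ae_of_all _ fun s => (Real.exp_pos _).le),
    ← intervalIntegral.integral_of_le ht, ← ENNReal.ofReal_mul (by positivity),
    intervalIntegral.integral_comp_mul_left (fun x => Real.exp x) hκ.ne', integral_exp, smul_eq_mul]
  gcongr
  exact sub_le_self _ (Real.exp_pos _).le

lemma mul_ofReal_inv_le_half {C : ℝ≥0∞} (hC : C ≠ ∞) :
    C * ENNReal.ofReal (2 * (C.toReal + 1))⁻¹ ≤ 2⁻¹ := by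
  have hC0 : 0 ≤ C.toReal := ENNReal.toReal_nonneg
  rw [ENNReal.ofReal_inv_of_pos (by positivity), ← div_eq_mul_inv]
  refine ENNReal.div_le_of_le_mul ?_
  rw [ENNReal.ofReal_mul two_pos.le, ENNReal.ofReal_add hC0 one_pos.le, ENNReal.ofReal_toReal hC,
    ENNReal.ofReal_ofNat, ENNReal.ofReal_one, ← mul_assoc,
    ENNReal.inv_mul_cancel two_ne_zero ENNReal.ofNat_ne_top, one_mul]
  exact le_self_add

/-- No measurability is needed: the proof bounds `S = sup_t e^{-κt} Y t`, which satisfies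
`S ≤ A + C κ⁻¹ S`, and `κ` is chosen with `C κ⁻¹ ≤ 1/2`. -/
lemma exists_gronwall_bound (T : ℝ) {C : ℝ≥0∞} (hC : C ≠ ∞) :
    ∃ K ≠ ∞, ∀ (A B : ℝ≥0∞) (Y : ℝ → ℝ≥0∞), B ≠ ∞ → (∀ t ∈ Icc 0 T, Y t ≤ B) →
      (∀ t ∈ Icc 0 T, Y t ≤ A + C * ∫⁻ s in Ioc 0 t, Y s) → ∀ t ∈ Icc 0 T, Y t ≤ K * A := by
  set κ : ℝ := 2 * (C.toReal + 1)
  have hκ : 0 < κ := by positivity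
  refine ⟨ENNReal.ofReal (Real.exp (κ * T)) * 2, by finiteness, fun A B Y hB hYB hY => ?_⟩
  set S : ℝ≥0∞ := ⨆ t ∈ Icc (0 : ℝ) T, ENNReal.ofReal (Real.exp (-(κ * t))) * Y t
  have hS_top : S ≠ ∞ := ne_top_of_le_ne_top hB <| iSup₂_le fun t ht =>
    (mul_le_of_le_one_left' (ofReal_exp_neg_le_one (mul_nonneg hκ.le ht.1))).trans (hYB t ht)
  have hYS : ∀ t ∈ Icc 0 T, Y t ≤ ENNReal.ofReal (Real.exp (κ * t)) * S := fun t ht => by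
    rw [← one_mul (Y t), ← ofReal_exp_mul_ofReal_exp_neg (κ * t), mul_assoc]
    gcongr
    exact le_iSup₂ (f := fun t (_ : t ∈ Icc 0 T) => ENNReal.ofReal (Real.exp (-(κ * t))) * Y t) t ht
  have hYint : ∀ t ∈ Icc 0 T, ∫⁻ s in Ioc 0 t, Y s ≤
      ENNReal.ofReal κ⁻¹ * ENNReal.ofReal (Real.exp (κ * t)) * S := fun t ht =>
    calc ∫⁻ s in Ioc 0 t, Y s ≤ ∫⁻ s in Ioc 0 t, ENNReal.ofReal (Real.exp (κ * s)) * S :=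
          setLIntegral_mono' measurableSet_Ioc fun s hs => hYS s ⟨hs.1.le, hs.2.trans ht.2⟩
      _ = (∫⁻ s in Ioc 0 t, ENNReal.ofReal (Real.exp (κ * s))) * S :=
          lintegral_mul_const' _ _ hS_top
      _ ≤ _ := by gcongr; exact lintegral_exp_mul_le hκ ht.1
  have hSA : S ≤ A + 2⁻¹ * S := iSup₂_le fun t ht =>
    calc ENNReal.ofReal (Real.exp (-(κ * t))) * Y t
        ≤ ENNReal.ofReal (Real.exp (-(κ * t))) * (A + C *
            (ENNReal.ofReal κ⁻¹ * ENNReal.ofReal (Real.exp (κ * t)) * S)) := by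
          gcongr
          exact (hY t ht).trans (by gcongr; exact hYint t ht)
      _ = ENNReal.ofReal (Real.exp (-(κ * t))) * A + C * ENNReal.ofReal κ⁻¹ *
            (ENNReal.ofReal (Real.exp (κ * t)) * ENNReal.ofReal (Real.exp (-(κ * t)))) * S := by
          ring
      _ ≤ 1 * A + 2⁻¹ * 1 * S := by
          rw [ofReal_exp_mul_ofReal_exp_neg]
          gcongr
          exacts [ofReal_exp_neg_le_one (mul_nonneg hκ.le ht.1), mul_ofReal_inv_le_half hC]
      _ = A + 2⁻¹ * S := by rw [one_mul, mul_one]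
  intro t ht
  calc Y t ≤ ENNReal.ofReal (Real.exp (κ * t)) * S := hYS t ht
    _ ≤ ENNReal.ofReal (Real.exp (κ * T)) * (2 * A) := by
        gcongr
        exacts [ht.2, le_two_mul_of_le_add_half hS_top hSA]
    _ = _ := (mul_assoc _ _ _).symm

/-! ### Sobolev regularity of the Navier–Stokes trajectory -/

lemma eHSq_le_of_hN_lt {α ε : ℝ} {c : Coef} (hc : FinH α c) (hε : hN α c < ε) :
    eHSq α c ≤ ENNReal.ofReal (ε ^ 2) := by
  have : 0 ≤ hN α c := Real.sqrt_nonneg _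
  rw [eHSq_eq_ofReal_hN_sq hc]
  gcongr

lemma norm_lt_of_hN_lt {α ε : ℝ} (hα : 0 ≤ α) {c : Coef} (hc : FinH α c) (hε : hN α c < ε)
    (k : Freq) : ‖c k‖ < ε := by
  refine lt_of_le_of_lt (Real.le_sqrt_of_sq_le ?_) hε
  calc ‖c k‖ ^ 2 ≤ lam k ^ α * ‖c k‖ ^ 2 :=
        le_mul_of_one_le_left (by positivity) (Real.one_le_rpow (one_le_lam k) hα)
    _ ≤ hSq α c := hc.le_tsum k fun j _ => lam_rpow_mul_norm_sq_nonneg α c j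

lemma ContH.continuousOn_coeff {α T : ℝ} {u : ℝ → Coef} (h : ContH α T u) (hα : 0 ≤ α)
    (hu : ∀ t ∈ Icc 0 T, FinH α (u t)) (k : Freq) : ContinuousOn (fun t => u t k) (Icc 0 T) := by
  rw [Metric.continuousOn_iff]
  intro t ht ε hε
  obtain ⟨δ, hδ, hclose⟩ := h t ht ε hε
  refine ⟨δ, hδ, fun s hs hst => ?_⟩
  rw [dist_eq_norm, ← Pi.sub_apply]
  exact norm_lt_of_hN_lt hα ((hu s hs).sub (hu t ht)) (hclose s hs hst) k

lemma ContH.exists_eHSq_le {α T : ℝ} {u : ℝ → Coef} (h : ContH α T u)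
    (hu : ∀ t ∈ Icc 0 T, FinH α (u t)) : ∃ B ≠ ∞, ∀ t ∈ Icc 0 T, eHSq α (u t) ≤ B := by
  refine isCompact_Icc.induction_on (p := fun s => ∃ B ≠ ∞, ∀ t ∈ s, eHSq α (u t) ≤ B)
    ⟨0, by simp, by simp⟩ ?_ ?_ ?_
  · rintro s t hst ⟨B, hB, hle⟩
    exact ⟨B, hB, fun x hx => hle x (hst hx)⟩
  · rintro s t ⟨B, hB, hle⟩ ⟨B', hB', hle'⟩
    exact ⟨max B B', by finiteness, fun x hx =>
      hx.elim (fun hx => le_max_of_le_left (hle x hx)) fun hx => le_max_of_le_right (hle' x hx)⟩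
  · intro t ht
    obtain ⟨δ, hδ, hclose⟩ := h t ht 1 one_pos
    have hut := finH_iff.1 (hu t ht)
    refine ⟨Icc 0 T ∩ Metric.ball t δ, inter_mem_nhdsWithin _ (Metric.ball_mem_nhds t hδ),
      2 * ENNReal.ofReal (1 ^ 2) + 2 * eHSq α (u t), by finiteness, fun s ⟨hs, hst⟩ => ?_⟩
    calc eHSq α (u s) = eHSq α ((u s - u t) + u t) := by rw [sub_add_cancel]
      _ ≤ 2 * eHSq α (u s - u t) + 2 * eHSq α (u t) := eHSq_add_le _ _ _
      _ ≤ _ := by gcongr; exact eHSq_le_of_hN_lt ((hu s hs).sub (hu t ht)) (hclose s hs hst)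

lemma MemL2H.lintegral_ne_top {α T : ℝ} {u : ℝ → Coef} (h : MemL2H α T u) :
    ∫⁻ t in Ioc 0 T, eHSq α (u t) ≠ ∞ := by
  rw [setLIntegral_congr_fun measurableSet_Ioc fun t ht => eHSq_eq_ofReal (h.1 t ht).2]
  exact h.2.lintegral_lt_top.ne

lemma le_ofReal_inv_mul_of_mul_le {r : ℝ} (hr : 0 < r) {x y : ℝ≥0∞}
    (h : ENNReal.ofReal r * x ≤ y) : x ≤ ENNReal.ofReal r⁻¹ * y :=
  calc x = ENNReal.ofReal r⁻¹ * (ENNReal.ofReal r * x) := by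
        rw [← mul_assoc, ← ENNReal.ofReal_mul (by positivity), inv_mul_cancel₀ hr.ne',
          ENNReal.ofReal_one, one_mul]
    _ ≤ ENNReal.ofReal r⁻¹ * y := by gcongr

/-- The energy space `L^∞([0,T], Ḣ^σ) ∩ L²([0,T], Ḣ^{σ+1})` of the heat equation. -/
structure MemEnergy (σ T : ℝ) (u : ℝ → Coef) : Prop where
  exists_bound : ∃ B ≠ ∞, ∀ t ∈ Icc 0 T, eHSq σ (u t) ≤ B
  lintegral_ne_top : ∫⁻ t in Ioc 0 T, eHSq (σ + 1) (u t) ≠ ∞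

lemma IsHeatSol.memEnergy {ν T σ : ℝ} {W N : ℝ → Coef} (h : IsHeatSol ν T W N) (hν : 0 < ν)
    (hT : 0 ≤ T) (hW0 : eHSq σ (W 0) ≠ ∞)
    (hN : ∫⁻ t in Ioc 0 T, eHSq (σ - 1) (N t) ≠ ∞) : MemEnergy σ T W := by
  set F := eHSq σ (W 0) + ENNReal.ofReal ν⁻¹ * ∫⁻ t in Ioc 0 T, eHSq (σ - 1) (N t)
  have hF : F ≠ ∞ := by finiteness
  have energy : ∀ t ∈ Icc 0 T,
      eHSq σ (W t) + ENNReal.ofReal ν * ∫⁻ s in Ioc 0 t, eHSq (σ + 1) (W s) ≤ F := fun t ht =>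
    (h.energy_le hν σ le_rfl ht.1 ht.2).trans <| by
      unfold F
      gcongr
      exact ht.2
  refine ⟨⟨F, hF, fun t ht => le_self_add.trans (energy t ht)⟩, ?_⟩
  exact ne_top_of_le_ne_top (by finiteness)
    (le_ofReal_inv_mul_of_mul_le hν (le_add_self.trans (energy T ⟨hT, le_rfl⟩)))

lemma exists_eHSq_Bc_self_le {σ τ : ℝ} (hσ : 1 ≤ σ) (hτ : 0 ≤ τ) (hτσ : τ ≤ σ + 1 / 2) :
    ∃ C ≠ ∞, ∀ c, eHSq (τ - 1) (Bc c c) ≤ C * eHSq σ c * eHSq (σ + 1) c := by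
  have hζ := spectralZeta_ne_top (q := 3 / 2) (by norm_num)
  refine ⟨(2 * ENNReal.ofReal (4 ^ (τ / 2))) ^ 2 * spectralZeta (3 / 2), by finiteness, fun c => ?_⟩
  obtain ⟨q, hq⟩ : ∃ q, τ + 2 * q = σ + 1 := ⟨(σ + 1 - τ) / 2, by ring⟩
  have wiener_le : wienerNorm (-q) c ^ 2 ≤ spectralZeta (3 / 2) * eHSq σ c :=
    (wienerNorm_sq_le _ _ _).trans (by gcongr; exact eHSq_mono (by linarith) c)
  calc eHSq (τ - 1) (Bc c c)
      ≤ (2 * ENNReal.ofReal (4 ^ (τ / 2))) ^ 2 * (wienerNorm (-q) c ^ 2 * eHSq (τ + 2 * q) c) :=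
        eHSq_Bc_self_le hτ (by linarith) c
    _ ≤ (2 * ENNReal.ofReal (4 ^ (τ / 2))) ^ 2 *
          (spectralZeta (3 / 2) * eHSq σ c * eHSq (σ + 1) c) := by
        rw [hq]
        gcongr
    _ = _ := by ring

namespace IsNSSol

variable {ν T : ℝ} {θ f : Coef} {u : ℝ → Coef}

lemma finH_one (hu : IsNSSol ν f T θ u) (hθ : FinH 1 θ) {t : ℝ} (ht : t ∈ Icc 0 T) :
    FinH 1 (u t) := by
  rcases ht.1.eq_or_lt with rfl | h0
  · rwa [hu.init]
  · exact (hu.memL2H2.1 t ⟨h0, ht.2⟩).2.mono one_le_two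

lemma isHeatSol (hu : IsNSSol ν f T θ u) (hθ : FinH 1 θ) :
    IsHeatSol ν T u fun t => f - Bc (u t) (u t) where
  continuousOn := hu.contH1.continuousOn_coeff zero_le_one fun _ ht => hu.finH_one hθ ht
  hasDerivAt k t ht := (hu.deriv k t ht).congr_deriv <| by
    rw [Pi.sub_apply, Complex.real_smul]
    ring

lemma memEnergy_one (hu : IsNSSol ν f T θ u) (hθ : FinH 1 θ) : MemEnergy 1 T u :=
  ⟨hu.contH1.exists_eHSq_le fun _ ht => hu.finH_one hθ ht,
    by rw [one_add_one_eq_two]; exact hu.memL2H2.lintegral_ne_top⟩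

lemma memEnergy_step (hu : IsNSSol ν f T θ u) (hν : 0 < ν) (hT : 0 ≤ T) {σ τ : ℝ} (hσ : 1 ≤ σ)
    (hστ : σ ≤ τ) (hτσ : τ ≤ σ + 1 / 2) (hθ : FinH τ θ) (hf : FinH (τ - 1) f)
    (h : MemEnergy σ T u) : MemEnergy τ T u := by
  obtain ⟨B, hB, hle⟩ := h.exists_bound
  obtain ⟨C, hC, hBc⟩ := exists_eHSq_Bc_self_le hσ (by linarith) hτσ
  have hfin := h.lintegral_ne_top
  have hf' := finH_iff.1 hf
  refine (hu.isHeatSol (hθ.mono (hσ.trans hστ))).memEnergy hν hT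
    (by rw [hu.init]; exact finH_iff.1 hθ) (ne_top_of_le_ne_top (b := 2 * eHSq (τ - 1) f *
      ENNReal.ofReal T + 2 * (C * B) * ∫⁻ t in Ioc 0 T, eHSq (σ + 1) (u t)) (by finiteness) ?_)
  calc ∫⁻ t in Ioc 0 T, eHSq (τ - 1) (f - Bc (u t) (u t))
      ≤ ∫⁻ t in Ioc 0 T, (2 * eHSq (τ - 1) f + 2 * (C * B) * eHSq (σ + 1) (u t)) := by
        refine setLIntegral_mono' measurableSet_Ioc fun t ht => (eHSq_sub_le _ _ _).trans ?_
        rw [mul_assoc 2 (C * B)]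
        gcongr
        exact (hBc (u t)).trans (by gcongr; exact hle t ⟨ht.1.le, ht.2⟩)
    _ = _ := by
        rw [lintegral_add_left measurable_const, setLIntegral_const, Real.volume_Ioc, sub_zero,
          lintegral_const_mul' _ _ (by finiteness)]

lemma memEnergy (hu : IsNSSol ν f T θ u) (hν : 0 < ν) (hT : 0 ≤ T) {σ : ℝ} (hσ : 1 ≤ σ)
    (hθ : FinH σ θ) (hf : FinH (σ - 1) f) : MemEnergy σ T u := by
  suffices climb : ∀ (n : ℕ) (τ : ℝ), 1 ≤ τ → τ ≤ 1 + n / 2 → τ ≤ σ → MemEnergy τ T u by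
    obtain ⟨n, hn⟩ := exists_nat_ge (2 * (σ - 1))
    exact climb n σ hσ (by linarith) le_rfl
  intro n
  induction n with
  | zero =>
    intro τ h1 hτ _
    obtain rfl : τ = 1 := by norm_num at hτ; linarith
    exact hu.memEnergy_one (hθ.mono hσ)
  | succ n ih =>
    intro τ h1 hτ hτσ
    push_cast at hτ
    have h_half : τ ≤ max 1 (τ - 1 / 2) + 1 / 2 := by linarith [le_max_right 1 (τ - 1 / 2)]
    have h_le : max 1 (τ - 1 / 2) ≤ τ := max_le h1 (by linarith)
    exact hu.memEnergy_step hν hT (le_max_left _ _) h_le h_half (hθ.mono hτσ)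
      (hf.mono (by linarith))
      (ih _ (le_max_left _ _) (max_le (le_add_of_nonneg_right (by positivity)) (by linarith))
        (h_le.trans hτσ))

lemma exists_wienerNorm_sq_le (hu : IsNSSol ν f T θ u) (hν : 0 < ν) (hT : 0 ≤ T) {p q : ℝ}
    (hq : 1 < q) (hpq : 1 ≤ 2 * p + q) (hθ : FinH (2 * p + q) θ) (hf : FinH (2 * p + q - 1) f) :
    ∃ K ≠ ∞, ∀ t ∈ Icc 0 T, wienerNorm p (u t) ^ 2 ≤ K := by
  obtain ⟨B, hB, hle⟩ := (hu.memEnergy hν hT hpq hθ hf).exists_bound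
  exact ⟨spectralZeta q * B, ENNReal.mul_ne_top (spectralZeta_ne_top hq) hB, fun t ht =>
    (wienerNorm_sq_le p q (u t)).trans (by gcongr; exact hle t ht)⟩

end IsNSSol

/-! ### Heat equations with a lower-order source -/

/-- `W` solves a heat equation whose source `N` is of order one in `W`, in the sense that
`‖N(t)‖²_{Ḣ^{σ-1}} ≤ C₀ ‖W(t)‖²_{Ḣ^σ}` for `|σ| ≤ R`, with smooth initial datum. All that is used of
the linearised Navier–Stokes equation is that its solutions have this form. -/
structure IsPerturbedHeatSol (ν T R : ℝ) (C₀ : ℝ≥0∞) (W N : ℝ → Coef) : Prop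
    extends IsHeatSol ν T W N where
  lintegral_ne_top : ∫⁻ t in Ioc 0 T, eHSq 1 (W t) ≠ ∞
  init_ne_top : ∀ σ, eHSq σ (W 0) ≠ ∞
  source_le : ∀ σ, |σ| ≤ R → ∀ t ∈ Ioc 0 T, eHSq (σ - 1) (N t) ≤ C₀ * eHSq σ (W t)

lemma IsLinSol.isPerturbedHeatSol {ν T R : ℝ} {K : ℝ≥0∞} {u W : ℝ → Coef} {ξ : Coef}
    (hW : IsLinSol ν u T ξ W) (hξ : ∀ σ, FinH σ ξ) (hWc : ContH 0 T W) (hW2 : MemL2H 1 T W)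
    (hu : ∀ t ∈ Icc 0 T, wienerNorm (R / 2) (u t) ^ 2 ≤ K) :
    IsPerturbedHeatSol ν T R (4 * K) W fun t => -Bc (u t) (W t) - Bc (W t) (u t) where
  continuousOn := hWc.continuousOn_coeff le_rfl fun t ht => by
    rcases ht.1.eq_or_lt with rfl | h0
    · rw [hW.init]; exact hξ 0
    · exact (hW2.1 t ⟨h0, ht.2⟩).2.mono zero_le_one
  hasDerivAt k t ht := (hW.deriv k t ht).congr_deriv <| by
    simp only [Pi.sub_apply, Pi.neg_apply, Pi.zero_apply, Complex.real_smul]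
    ring
  lintegral_ne_top := hW2.lintegral_ne_top
  init_ne_top σ := by rw [hW.init]; exact finH_iff.1 (hξ σ)
  source_le σ hσ t ht := by
    have wiener_le : wienerNorm |σ / 2| (u t) ^ 2 ≤ K := by
      refine le_trans ?_ (hu t ⟨ht.1.le, ht.2⟩)
      gcongr
      apply wienerNorm_mono
      rw [abs_div, abs_two]
      linarith
    calc eHSq (σ - 1) (-Bc (u t) (W t) - Bc (W t) (u t))
        ≤ 2 * eHSq (σ - 1) (-Bc (u t) (W t)) + 2 * eHSq (σ - 1) (Bc (W t) (u t)) :=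
          eHSq_sub_le _ _ _
      _ ≤ 2 * (K * eHSq σ (W t)) + 2 * (K * eHSq σ (W t)) := by
          rw [eHSq_neg]
          gcongr
          · exact (eHSq_Bc_le_left _ _ _).trans (by gcongr)
          · exact (eHSq_Bc_le_right _ _ _).trans (by gcongr)
      _ = 4 * K * eHSq σ (W t) := by ring

lemma lintegral_Ioc_mono (Y : ℝ → ℝ≥0∞) {s₀ s₁ t₀ t₁ : ℝ} (h0 : s₀ ≤ t₀) (h1 : t₁ ≤ s₁) :
    ∫⁻ t in Ioc t₀ t₁, Y t ≤ ∫⁻ t in Ioc s₀ s₁, Y t :=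
  lintegral_mono_set (Ioc_subset_Ioc h0 h1)

lemma le_ofReal_inv_mul_lintegral_add {T : ℝ} (hT : 0 < T) {x A : ℝ≥0∞} {Y : ℝ → ℝ≥0∞}
    (h : ∀ t ∈ Ioc 0 T, x ≤ Y t + A) : x ≤ ENNReal.ofReal T⁻¹ * (∫⁻ t in Ioc 0 T, Y t) + A := by
  have average : ENNReal.ofReal T * x ≤ (∫⁻ t in Ioc 0 T, Y t) + ENNReal.ofReal T * A := by
    have := setLIntegral_mono' (μ := volume) measurableSet_Ioc h
    rwa [lintegral_add_right _ measurable_const, setLIntegral_const, setLIntegral_const,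
      Real.volume_Ioc, sub_zero, mul_comm x, mul_comm A] at this
  refine (le_ofReal_inv_mul_of_mul_le hT average).trans_eq ?_
  rw [mul_add, ← mul_assoc _ _ A, ← ENNReal.ofReal_mul (by positivity), inv_mul_cancel₀ hT.ne',
    ENNReal.ofReal_one, one_mul]

/-- Well-posedness at level `σ`: solutions are bounded in the energy space of order `σ` by the
`Ḣ^σ`-norm of the initial datum, uniformly in the solution. -/
def EnergyStable (ν T R : ℝ) (C₀ : ℝ≥0∞) (σ : ℝ) : Prop :=
  ∃ C ≠ ∞, ∀ W N, IsPerturbedHeatSol ν T R C₀ W N →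
    (∀ t ∈ Icc 0 T, eHSq σ (W t) ≤ C * eHSq σ (W 0)) ∧
      ∫⁻ t in Ioc 0 T, eHSq (σ + 1) (W t) ≤ C * eHSq σ (W 0)

section

variable {ν T R σ : ℝ} {C₀ : ℝ≥0∞}

namespace IsPerturbedHeatSol

variable {W N : ℝ → Coef} {t₀ t₁ : ℝ}

lemma lintegral_source_le (h : IsPerturbedHeatSol ν T R C₀ W N) (hC₀ : C₀ ≠ ∞) (hσ : |σ| ≤ R)
    (h0 : 0 ≤ t₀) (h1 : t₁ ≤ T) :
    ∫⁻ t in Ioc t₀ t₁, eHSq (σ - 1) (N t) ≤ C₀ * ∫⁻ t in Ioc t₀ t₁, eHSq σ (W t) := by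
  rw [← lintegral_const_mul' _ _ hC₀]
  exact setLIntegral_mono' measurableSet_Ioc fun t ht =>
    h.source_le σ hσ t ⟨h0.trans_lt ht.1, ht.2.trans h1⟩

lemma energy_self_le (h : IsPerturbedHeatSol ν T R C₀ W N) (hν : 0 < ν) (hC₀ : C₀ ≠ ∞)
    (hσ : |σ| ≤ R) (h0 : 0 ≤ t₀) (h01 : t₀ ≤ t₁) (h1 : t₁ ≤ T) :
    eHSq σ (W t₁) + ENNReal.ofReal ν * ∫⁻ t in Ioc t₀ t₁, eHSq (σ + 1) (W t) ≤
      eHSq σ (W t₀) + ENNReal.ofReal ν⁻¹ * C₀ * ∫⁻ t in Ioc t₀ t₁, eHSq σ (W t) := by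
  refine (h.energy_le hν σ h0 h01 h1).trans ?_
  rw [mul_assoc _ C₀]
  gcongr _ + _ * ?_
  exact h.lintegral_source_le hC₀ hσ h0 h1

lemma exists_eHSq_zero_le (h : IsPerturbedHeatSol ν T R C₀ W N) (hν : 0 < ν) (hC₀ : C₀ ≠ ∞)
    (hR : 0 ≤ R) : ∃ B ≠ ∞, ∀ t ∈ Icc 0 T, eHSq 0 (W t) ≤ B := by
  have hfin := h.lintegral_ne_top
  have hinit := h.init_ne_top 0
  refine ⟨eHSq 0 (W 0) + ENNReal.ofReal ν⁻¹ * C₀ * ∫⁻ t in Ioc 0 T, eHSq 1 (W t), by finiteness,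
    fun t ht => ?_⟩
  refine (le_self_add.trans
    (h.energy_self_le hν hC₀ (by rwa [abs_zero]) le_rfl ht.1 ht.2)).trans ?_
  gcongr _ + _ * ?_
  exact (lintegral_Ioc_mono _ le_rfl ht.2).trans (lintegral_mono fun t => eHSq_mono zero_le_one _)

end IsPerturbedHeatSol

lemma energyStable_of_lintegral_le (hν : 0 < ν) (hT : 0 ≤ T) (hC₀ : C₀ ≠ ∞) (hσ : |σ| ≤ R)
    (h : ∃ K ≠ ∞, ∀ W N, IsPerturbedHeatSol ν T R C₀ W N →
      ∫⁻ t in Ioc 0 T, eHSq σ (W t) ≤ K * eHSq σ (W 0)) : EnergyStable ν T R C₀ σ := by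
  obtain ⟨K, hK, lintegral_bound⟩ := h
  set D := 1 + ENNReal.ofReal ν⁻¹ * C₀ * K with hD
  refine ⟨D + ENNReal.ofReal ν⁻¹ * D, by finiteness, fun W N hW => ?_⟩
  have energy : ∀ t ∈ Icc 0 T, eHSq σ (W t) +
      ENNReal.ofReal ν * ∫⁻ s in Ioc 0 t, eHSq (σ + 1) (W s) ≤ D * eHSq σ (W 0) := by
    intro t ht
    refine (hW.energy_self_le hν hC₀ hσ le_rfl ht.1 ht.2).trans ?_
    rw [hD, add_mul, one_mul, mul_assoc _ K]
    gcongr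
    exact (lintegral_Ioc_mono _ le_rfl ht.2).trans (lintegral_bound W N hW)
  refine ⟨fun t ht => (le_self_add.trans (energy t ht)).trans (by gcongr; exact le_self_add), ?_⟩
  refine (le_ofReal_inv_mul_of_mul_le hν (le_add_self.trans (energy T ⟨hT, le_rfl⟩))).trans ?_
  rw [← mul_assoc]
  gcongr
  exact le_add_self

lemma energyStable_of_nonpos (hν : 0 < ν) (hT : 0 ≤ T) (hC₀ : C₀ ≠ ∞) (hσ : |σ| ≤ R)
    (hσ0 : σ ≤ 0) : EnergyStable ν T R C₀ σ := by
  obtain ⟨K, hK, gronwall⟩ := exists_gronwall_bound T (C := ENNReal.ofReal ν⁻¹ * C₀) (by finiteness)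
  refine energyStable_of_lintegral_le hν hT hC₀ hσ
    ⟨K * ENNReal.ofReal T, by finiteness, fun W N h => ?_⟩
  obtain ⟨B, hB, hWB⟩ := h.exists_eHSq_zero_le hν hC₀ ((abs_nonneg σ).trans hσ)
  have sup_le := gronwall (eHSq σ (W 0)) B (fun t => eHSq σ (W t)) hB
    (fun t ht => (eHSq_mono hσ0 _).trans (hWB t ht))
    (fun t ht => le_self_add.trans (h.energy_self_le hν hC₀ hσ le_rfl ht.1 ht.2))
  calc ∫⁻ t in Ioc 0 T, eHSq σ (W t) ≤ ∫⁻ _ in Ioc 0 T, K * eHSq σ (W 0) :=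
        setLIntegral_mono' measurableSet_Ioc fun t ht => sup_le t ⟨ht.1.le, ht.2⟩
    _ = K * ENNReal.ofReal T * eHSq σ (W 0) := by
        rw [setLIntegral_const, Real.volume_Ioc, sub_zero, mul_right_comm]

lemma EnergyStable.step {τ : ℝ} (h : EnergyStable ν T R C₀ σ) (hν : 0 < ν) (hT : 0 ≤ T)
    (hC₀ : C₀ ≠ ∞) (hτ : |τ| ≤ R) (hστ : σ ≤ τ) (hτσ : τ ≤ σ + 1) : EnergyStable ν T R C₀ τ := by
  obtain ⟨K, hK, hstable⟩ := h
  refine energyStable_of_lintegral_le hν hT hC₀ hτ ⟨K, hK, fun W N hW => ?_⟩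
  calc ∫⁻ t in Ioc 0 T, eHSq τ (W t) ≤ ∫⁻ t in Ioc 0 T, eHSq (σ + 1) (W t) :=
        lintegral_mono fun t => eHSq_mono hτσ _
    _ ≤ K * eHSq σ (W 0) := (hstable W N hW).2
    _ ≤ K * eHSq τ (W 0) := by gcongr; exact eHSq_mono hστ _

lemma energyStable (hν : 0 < ν) (hT : 0 ≤ T) (hC₀ : C₀ ≠ ∞) (hσ : |σ| ≤ R) :
    EnergyStable ν T R C₀ σ := by
  suffices climb : ∀ (n : ℕ) (τ : ℝ), |τ| ≤ R → τ ≤ n → EnergyStable ν T R C₀ τ by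
    obtain ⟨n, hn⟩ := exists_nat_ge σ
    exact climb n σ hσ hn
  intro n
  induction n with
  | zero => exact fun τ hτ hτ0 => energyStable_of_nonpos hν hT hC₀ hτ (by simpa using hτ0)
  | succ n ih =>
    intro τ hτ hτn
    rcases le_total τ 0 with hτ0 | hτ0
    · exact energyStable_of_nonpos hν hT hC₀ hτ hτ0
    push_cast at hτn
    have h_nonneg := le_max_left 0 (τ - 1)
    have h_le : max 0 (τ - 1) ≤ τ := max_le hτ0 (by linarith)
    refine (ih (max 0 (τ - 1)) ?_ (max_le n.cast_nonneg (by linarith))).step hν hT hC₀ hτ h_le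
      (by linarith [le_max_right 0 (τ - 1)])
    rw [abs_of_nonneg h_nonneg]
    exact h_le.trans ((le_abs_self τ).trans hτ)

lemma exists_eHSq_final_le (hν : 0 < ν) (hT : 0 < T) (hC₀ : C₀ ≠ ∞) (hσ : |σ| ≤ R)
    (hσ1 : |σ + 1| ≤ R) :
    ∃ C ≠ ∞, ∀ W N, IsPerturbedHeatSol ν T R C₀ W N → eHSq (σ + 1) (W T) ≤ C * eHSq σ (W 0) := by
  obtain ⟨K, hK, hstable⟩ := energyStable hν hT.le hC₀ hσ
  refine ⟨ENNReal.ofReal T⁻¹ * K + ENNReal.ofReal ν⁻¹ * C₀ * K, by finiteness, fun W N h => ?_⟩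
  have smoothing := (hstable W N h).2
  have growth : ∀ t ∈ Ioc 0 T, eHSq (σ + 1) (W T) ≤
      eHSq (σ + 1) (W t) + ENNReal.ofReal ν⁻¹ * C₀ * (K * eHSq σ (W 0)) := by
    intro t ht
    refine (le_self_add.trans (h.energy_self_le hν hC₀ hσ1 ht.1.le ht.2 le_rfl)).trans ?_
    gcongr
    exact (lintegral_Ioc_mono _ ht.1.le le_rfl).trans smoothing
  calc eHSq (σ + 1) (W T)
      ≤ ENNReal.ofReal T⁻¹ * (∫⁻ t in Ioc 0 T, eHSq (σ + 1) (W t)) +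
          ENNReal.ofReal ν⁻¹ * C₀ * (K * eHSq σ (W 0)) := le_ofReal_inv_mul_lintegral_add hT growth
    _ ≤ ENNReal.ofReal T⁻¹ * (K * eHSq σ (W 0)) +
          ENNReal.ofReal ν⁻¹ * C₀ * (K * eHSq σ (W 0)) := by gcongr
    _ = _ := by ring

lemma exists_eHSq_init_le (hν : 0 < ν) (hT : 0 < T) (hC₀ : C₀ ≠ ∞) (hσ : |σ| ≤ R) :
    ∃ C ≠ ∞, ∀ W N, IsPerturbedHeatSol ν T R C₀ W N →
      eHSq σ (W 0) ≤ C * ∫⁻ t in Ioc 0 T, eHSq (σ + 1) (W t) := by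
  set A := 3 * ENNReal.ofReal ν + ENNReal.ofReal ν⁻¹ * C₀
  refine ⟨ENNReal.ofReal T⁻¹ + A, by finiteness, fun W N h => ?_⟩
  set Q := ∫⁻ t in Ioc 0 T, eHSq (σ + 1) (W t)
  have lower_order : ∫⁻ t in Ioc 0 T, eHSq σ (W t) ≤ Q :=
    lintegral_mono fun t => eHSq_mono (by linarith) _
  have backward : ∀ t ∈ Ioc 0 T, eHSq σ (W 0) ≤ eHSq σ (W t) + A * Q := by
    intro t ht
    refine (h.energy_le_backward hν σ le_rfl ht.1.le ht.2).trans ?_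
    rw [add_mul, mul_assoc _ C₀]
    gcongr
    · exact lintegral_Ioc_mono _ le_rfl ht.2
    · refine (h.lintegral_source_le hC₀ hσ le_rfl ht.2).trans ?_
      gcongr
      exact (lintegral_Ioc_mono _ le_rfl ht.2).trans lower_order
  calc eHSq σ (W 0) ≤ ENNReal.ofReal T⁻¹ * (∫⁻ t in Ioc 0 T, eHSq σ (W t)) + A * Q :=
        le_ofReal_inv_mul_lintegral_add hT backward
    _ ≤ ENNReal.ofReal T⁻¹ * Q + A * Q := by gcongr
    _ = _ := by ring

end

/-! ### Fourier multipliers -/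

section Estimates

variable {σ : ℝ} {c d : Coef}

lemma eHSq_le_of_enorm_le (h : ∀ k, ‖c k‖ₑ ≤ ‖d k‖ₑ) : eHSq σ c ≤ eHSq σ d :=
  ENNReal.tsum_le_tsum fun k => by gcongr; exact h k

lemma eHSq_smul (σ r : ℝ) (c : Coef) : eHSq σ (r • c) = ‖r‖ₑ ^ 2 * eHSq σ c := by
  simp only [eHSq, Pi.smul_apply, enorm_smul, mul_pow, ← ENNReal.tsum_mul_left]
  exact tsum_congr fun k => by ring

lemma eHSq_le_of_tendsto {ι : Type*} {l : Filter ι} [l.NeBot] {X : ι → Coef} {ρ : ι → ℝ≥0∞}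
    {B : ℝ≥0∞} (hX : ∀ k, Tendsto (fun n => X n k) l (𝓝 (c k))) (hρ : Tendsto ρ l (𝓝 B))
    (h : ∀ n, eHSq σ (X n) ≤ ρ n) : eHSq σ c ≤ B := by
  unfold eHSq
  rw [ENNReal.tsum_eq_iSup_sum]
  refine iSup_le fun F => ?_
  have partial_sum : Tendsto (fun n => ∑ k ∈ F, lamPow σ k * ‖X n k‖ₑ ^ 2) l
      (𝓝 (∑ k ∈ F, lamPow σ k * ‖c k‖ₑ ^ 2)) :=
    tendsto_finsetSum _ fun k _ =>
      ENNReal.Tendsto.const_mul (ENNReal.Tendsto.pow (hX k).enorm) (Or.inr (lamPow_ne_top σ k))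
  exact le_of_tendsto_of_tendsto' partial_sum hρ fun n => (ENNReal.sum_le_tsum F).trans (h n)

lemma innerC_congr_left {c₁ c₂ : Coef} (h : ∀ k, d k ≠ 0 → c₁ k = c₂ k) :
    innerC c₁ d = innerC c₂ d := by
  refine tsum_congr fun k => ?_
  by_cases hk : d k = 0
  · rw [hk, map_zero, mul_zero, mul_zero]
  · rw [h k hk]

lemma enorm_conj (z : ℂ) : ‖conj z‖ₑ = ‖z‖ₑ := by
  rw [← ofReal_norm, ← ofReal_norm, RCLike.norm_conj]

lemma two_mul_enorm_innerC_le (σ : ℝ) (C : ℝ≥0∞) (c d : Coef) :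
    2 * (C * ‖innerC c d‖ₑ) ≤ C ^ 2 * eHSq σ c + eHSq (-σ) d := by
  have weights : ∀ k, lamPow (σ / 2) k * lamPow (-σ / 2) k = 1 := fun k => by
    rw [lamPow_mul, ← lamPow_zero k]; ring_nf
  have split_sq : ∀ r k, lamPow (r / 2) k ^ 2 = lamPow r k := fun r k => by
    rw [lamPow_sq, mul_div_cancel₀ _ two_ne_zero]
  calc 2 * (C * ‖innerC c d‖ₑ) ≤ 2 * (C * ∑' k, ‖c k * conj (d k)‖ₑ) := by
        gcongr; exact enorm_tsum_le_tsum_enorm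
    _ = ∑' k, 2 * (C * (‖c k‖ₑ * ‖d k‖ₑ)) := by
        simp only [enorm_mul, enorm_conj, ENNReal.tsum_mul_left]
    _ ≤ ∑' k, (C ^ 2 * (lamPow σ k * ‖c k‖ₑ ^ 2) + lamPow (-σ) k * ‖d k‖ₑ ^ 2) :=
        ENNReal.tsum_le_tsum fun k => by
          have amgm := ennreal_two_mul_mul_le_add_sq (C * (lamPow (σ / 2) k * ‖c k‖ₑ))
            (lamPow (-σ / 2) k * ‖d k‖ₑ)
          rw [mul_pow, mul_pow, mul_pow, split_sq, split_sq] at amgm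
          refine le_trans (le_of_eq ?_) amgm
          rw [← mul_one (2 * _), ← weights k]
          ring
    _ = C ^ 2 * eHSq σ c + eHSq (-σ) d := by
        rw [ENNReal.tsum_add, ENNReal.tsum_mul_left, eHSq, eHSq]

end Estimates

/-- The fractional Laplacian `(-Δ)^σ`. -/
def fracLap (σ : ℝ) (c : Coef) : Coef := fun k => lam k ^ σ • c k

lemma fracLap_zero (c : Coef) : fracLap 0 c = c := by
  funext k
  rw [fracLap, Real.rpow_zero, one_smul]

lemma enorm_lam_rpow_smul (σ : ℝ) (k : Freq) (z : ℂ) :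
    ‖lam k ^ σ • z‖ₑ = lamPow σ k * ‖z‖ₑ := by
  rw [enorm_smul, lamPow, Real.enorm_of_nonneg (lam_rpow_nonneg σ k)]

lemma eHSq_fracLap (s σ : ℝ) (c : Coef) : eHSq s (fracLap σ c) = eHSq (s + 2 * σ) c :=
  tsum_congr fun k => by
    rw [fracLap, enorm_lam_rpow_smul, mul_pow, lamPow_sq, ← mul_assoc, lamPow_mul]

lemma innerC_fracLap_self (σ : ℝ) (c : Coef) : innerC c (fracLap σ c) = (hSq σ c : ℂ) := by
  rw [innerC, hSq, Complex.ofReal_tsum]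
  refine tsum_congr fun k => ?_
  rw [fracLap, Complex.real_smul, map_mul, Complex.conj_ofReal, mul_left_comm, Complex.mul_conj']
  push_cast
  rfl

lemma IsReal.fracLap {c : Coef} (hc : IsReal c) (σ : ℝ) : IsReal (fracLap σ c) := fun k => by
  simp only [NS2D.fracLap, lam_fneg, hc k, Complex.real_smul, map_mul, Complex.conj_ofReal, mul_neg]

lemma IsReal.smul {c : Coef} (hc : IsReal c) (r : ℝ) : IsReal (r • c) := fun k => by
  simp only [Pi.smul_apply, hc k, Complex.real_smul, map_mul, Complex.conj_ofReal, mul_neg]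

lemma IsReal.add {c d : Coef} (hc : IsReal c) (hd : IsReal d) : IsReal (c + d) := fun k => by
  simp only [Pi.add_apply, hc k, hd k, map_add, neg_add]

lemma finite_setOf_lam_le (N : ℝ) : {k : Freq | lam k ≤ N}.Finite := by
  rcases le_or_gt N 0 with hN | hN
  · exact Set.finite_empty.subset fun k hk => absurd (lam_pos k) (not_lt.2 (le_trans hk hN))
  have small := (summable_lam_rpow one_lt_two).tendsto_cofinite_zero.eventually
    (gt_mem_nhds (show 0 < N ^ (-2 : ℝ) by positivity))
  refine (eventually_cofinite.1 small).subset fun k hk => not_lt.2 ?_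
  exact Real.rpow_le_rpow_of_nonpos (lam_pos k) hk (by norm_num)

/-- The spectral projection onto the frequencies with `λ_k ≤ N`. -/
def lowPass (N : ℝ) (c : Coef) : Coef := {k | lam k ≤ N}.indicator c

/-- The spectral projection onto the frequencies with `λ_k > N`. -/
def highPass (N : ℝ) (c : Coef) : Coef := {k | lam k ≤ N}ᶜ.indicator c

section Projections

variable {N σ : ℝ} {c : Coef} {k : Freq}

lemma lowPass_apply_of_le (hk : lam k ≤ N) (c : Coef) : lowPass N c k = c k :=
  indicator_of_mem (s := {k | lam k ≤ N}) hk c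

lemma lowPass_apply_of_lt (hk : N < lam k) (c : Coef) : lowPass N c k = 0 :=
  indicator_of_notMem (s := {k | lam k ≤ N}) (not_le.2 hk) c

lemma highPass_apply_of_le (hk : lam k ≤ N) (c : Coef) : highPass N c k = 0 :=
  indicator_of_notMem (s := {k | lam k ≤ N}ᶜ) (not_not.2 hk) c

lemma highPass_apply_of_lt (hk : N < lam k) (c : Coef) : highPass N c k = c k :=
  indicator_of_mem (s := {k | lam k ≤ N}ᶜ) (not_le.2 hk) c

lemma highPass_eq_sub (N : ℝ) (c : Coef) : highPass N c = c - lowPass N c :=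
  eq_sub_of_add_eq' (indicator_self_add_compl _ c)

lemma lowPass_add (N : ℝ) (c d : Coef) : lowPass N (c + d) = lowPass N c + lowPass N d :=
  indicator_add' _ c d

lemma lowPass_smul (N r : ℝ) (c : Coef) : lowPass N (r • c) = r • lowPass N c :=
  indicator_const_smul _ r c

lemma IsReal.lowPass (hc : IsReal c) (N : ℝ) : IsReal (lowPass N c) := fun k => by
  rcases le_or_gt (lam k) N with hk | hk
  · rw [lowPass_apply_of_le hk, lowPass_apply_of_le (by rwa [lam_fneg]), hc k]
  · rw [lowPass_apply_of_lt hk, lowPass_apply_of_lt (by rwa [lam_fneg]), map_zero, neg_zero]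

lemma eHSq_highPass_le_mul (hN : 0 < N) {δ : ℝ} (hδ : 0 ≤ δ) (σ : ℝ) (c : Coef) :
    eHSq σ (highPass N c) ≤ ENNReal.ofReal (N ^ (-δ)) * eHSq (σ + δ) c := by
  rw [eHSq, eHSq, ← ENNReal.tsum_mul_left]
  refine ENNReal.tsum_le_tsum fun k => ?_
  rcases le_or_gt (lam k) N with hk | hk
  · simp only [highPass_apply_of_le hk, enorm_zero, ne_eq, OfNat.ofNat_ne_zero, not_false_eq_true,
      zero_pow, mul_zero, zero_le]
  · rw [highPass_apply_of_lt hk, ← mul_assoc, lamPow, lamPow, ← ENNReal.ofReal_mul (by positivity)]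
    gcongr
    exact rpow_le_rpow_neg_mul_rpow_add hN hk.le hδ

lemma tendsto_lowPass_apply (c : Coef) (k : Freq) :
    Tendsto (fun N => lowPass N c k) atTop (𝓝 (c k)) :=
  tendsto_const_nhds.congr' <| (eventually_ge_atTop (lam k)).mono fun _ hN =>
    (lowPass_apply_of_le hN c).symm

lemma eHSq_le_of_forall_lowPass_le {B : ℝ≥0∞} (h : ∀ N, eHSq σ (lowPass N c) ≤ B) :
    eHSq σ c ≤ B :=
  eHSq_le_of_tendsto (tendsto_lowPass_apply c) tendsto_const_nhds h

lemma tendsto_eHSq_highPass (h : FinH σ c) :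
    Tendsto (fun N => eHSq σ (highPass N c)) atTop (𝓝 0) := by
  have pointwise : ∀ k, Tendsto (fun N => lamPow σ k * ‖highPass N c k‖ₑ ^ 2) atTop (𝓝 0) :=
    fun k => tendsto_const_nhds.congr' <| (eventually_ge_atTop (lam k)).mono fun N hN => by
      simp only [highPass_apply_of_le hN, enorm_zero, ne_eq, OfNat.ofNat_ne_zero,
        not_false_eq_true, zero_pow, mul_zero]
  let _ : MeasurableSpace Freq := ⊤
  simp only [eHSq, ← lintegral_count]
  rw [← lintegral_zero (μ := (Measure.count : Measure Freq))]
  refine tendsto_lintegral_filter_of_dominated_convergence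
    (fun k => lamPow σ k * ‖c k‖ₑ ^ 2) (Eventually.of_forall fun N => measurable_of_countable _)
    (Eventually.of_forall fun N => Eventually.of_forall fun k => ?_) ?_
    (Eventually.of_forall pointwise)
  · gcongr
    exact enorm_indicator_le_enorm_self _ _
  · rw [lintegral_count]
    exact finH_iff.1 h

end Projections

/-- The space of real fields with spectrum in `{λ_k ≤ N}`, used as Galerkin space and as space of
test fields. -/
def lowModes (N : ℝ) : Submodule ℝ Coef where
  carrier := {c | IsReal c ∧ ∀ k, N < lam k → c k = 0}
  zero_mem' := ⟨fun k => by simp only [Pi.zero_apply, map_zero, neg_zero], fun k _ => rfl⟩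
  add_mem' hc hd := ⟨hc.1.add hd.1, fun k hk => by
    rw [Pi.add_apply, hc.2 k hk, hd.2 k hk, add_zero]⟩
  smul_mem' r _ hc := ⟨hc.1.smul r, fun k hk => by rw [Pi.smul_apply, hc.2 k hk, smul_zero]⟩

section LowModes

variable {N : ℝ} {c : Coef}

lemma lowPass_mem_lowModes (hc : IsReal c) (N : ℝ) : lowPass N c ∈ lowModes N :=
  ⟨hc.lowPass N, fun _ hk => lowPass_apply_of_lt hk c⟩

lemma fracLap_mem_lowModes (hc : c ∈ lowModes N) (σ : ℝ) : fracLap σ c ∈ lowModes N :=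
  ⟨hc.1.fracLap σ, fun k hk => by rw [fracLap, hc.2 k hk, smul_zero]⟩

lemma summable_of_forall_lam_gt {E : Type*} [NormedAddCommGroup E] {F : Freq → E}
    (hF : ∀ k, N < lam k → F k = 0) : Summable F :=
  summable_of_hasFiniteSupport <| (finite_setOf_lam_le N).subset fun k hk =>
    not_lt.1 fun hlt => hk (hF k hlt)

lemma memHinf_of_mem_lowModes (hc : c ∈ lowModes N) : MemHinf c := fun σ =>
  ⟨hc.1, summable_of_forall_lam_gt (N := N) fun k hk => by
    rw [hc.2 k hk, norm_zero, zero_pow two_ne_zero, mul_zero]⟩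

instance finite_lowModes (N : ℝ) : Module.Finite ℝ (lowModes N) := by
  have : Finite {k : Freq | lam k ≤ N} := (finite_setOf_lam_le N).to_subtype
  let restrict : lowModes N →ₗ[ℝ] ({k : Freq | lam k ≤ N} → ℂ) :=
    { toFun := fun c k => c.1 k.1
      map_add' := fun _ _ => rfl
      map_smul' := fun _ _ => rfl }
  refine Module.Finite.of_injective restrict fun c d hcd => ?_
  ext k
  rcases le_or_gt (lam k) N with hk | hk
  · exact congrFun hcd ⟨k, hk⟩
  · rw [c.2.2 k hk, d.2.2 k hk]

end LowModes

/-! ### Interpolation and duality -/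

lemma exists_pos_ofReal_mul_le_one {C : ℝ≥0∞} (hC : C ≠ ∞) :
    ∃ ε : ℝ, 0 < ε ∧ ENNReal.ofReal ε * C ≤ 1 := by
  lift C to NNReal using hC
  refine ⟨((C : ℝ) + 1)⁻¹, by positivity, ?_⟩
  rw [← ENNReal.ofReal_coe_nnreal, ← ENNReal.ofReal_mul (by positivity), ENNReal.ofReal_le_one,
    inv_mul_le_one₀ (by positivity)]
  exact le_add_of_nonneg_right zero_le_one

lemma ennreal_le_of_two_mul_le_add {x y : ℝ≥0∞} (hx : x ≠ ∞) (h : 2 * x ≤ y + x) : x ≤ y := by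
  rw [two_mul] at h
  exact (ENNReal.add_le_add_iff_right hx).1 h

lemma exists_lamPow_le_add {p q : ℝ} (hpq : p < q) (r : ℝ) {ε : ℝ} (hε : 0 < ε) :
    ∃ C ≠ (∞ : ℝ≥0∞), ∀ k, lamPow p k ≤ ENNReal.ofReal ε * lamPow q k + C * lamPow r k := by
  obtain ⟨N, hN, hNε⟩ := ((eventually_gt_atTop 0).and
    ((tendsto_rpow_neg_atTop (sub_pos.2 hpq)).eventually (ge_mem_nhds hε))).exists
  have low := finite_setOf_lam_le N
  refine ⟨∑ k ∈ low.toFinset, lamPow (p - r) k,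
    ENNReal.sum_ne_top.2 fun k _ => lamPow_ne_top _ k, fun k => ?_⟩
  rcases le_or_gt (lam k) N with hk | hk
  · refine le_add_left ?_
    rw [show lamPow p k = lamPow (p - r) k * lamPow r k by rw [lamPow_mul, sub_add_cancel]]
    gcongr
    exact Finset.single_le_sum (f := fun k => lamPow (p - r) k) (fun _ _ => zero_le)
      (low.mem_toFinset.2 hk)
  · refine le_add_right ?_
    rw [lamPow, lamPow, ← ENNReal.ofReal_mul hε.le]
    gcongr
    calc lam k ^ p ≤ N ^ (-(q - p)) * lam k ^ (p + (q - p)) :=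
          rpow_le_rpow_neg_mul_rpow_add hN hk.le (sub_pos.2 hpq).le
      _ ≤ ε * lam k ^ q := by
          rw [add_sub_cancel]
          exact mul_le_mul_of_nonneg_right hNε (lam_rpow_nonneg q k)

lemma exists_eHSq_le_add {p q : ℝ} (hpq : p < q) (r : ℝ) {ε : ℝ} (hε : 0 < ε) :
    ∃ C ≠ (∞ : ℝ≥0∞), ∀ c, eHSq p c ≤ ENNReal.ofReal ε * eHSq q c + C * eHSq r c := by
  obtain ⟨C, hC, h⟩ := exists_lamPow_le_add hpq r hε
  refine ⟨C, hC, fun c => ?_⟩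
  simp only [eHSq, ← ENNReal.tsum_mul_left, ← ENNReal.tsum_add]
  refine ENNReal.tsum_le_tsum fun k => ?_
  rw [← mul_assoc, ← mul_assoc, ← add_mul]
  gcongr
  exact h k

lemma innerC_smul_right (r : ℝ) (c d : Coef) : innerC c (r • d) = r * innerC c d := by
  rw [innerC, innerC, ← tsum_mul_left]
  refine tsum_congr fun k => ?_
  rw [Pi.smul_apply, Complex.real_smul, map_mul, Complex.conj_ofReal, mul_left_comm]

/-- Testing with a small multiple of `(-Δ)^σ c` lets the quadratic term be absorbed. -/
lemma exists_eHSq_le_of_enorm_innerC_le (σ : ℝ) {C : ℝ≥0∞} (hC : C ≠ ∞) :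
    ∃ C' ≠ (∞ : ℝ≥0∞), ∀ c E, IsReal c →
      (∀ N, ∀ g ∈ lowModes N, ‖innerC c g‖ₑ ≤ C * (E + eHSq (-σ) g)) → eHSq σ c ≤ C' * E := by
  obtain ⟨τ, hτ, hτC⟩ := exists_pos_ofReal_mul_le_one (C := 2 * C) (by finiteness)
  have hτ₀ : ENNReal.ofReal τ ≠ 0 := (ENNReal.ofReal_pos.2 hτ).ne'
  refine ⟨(ENNReal.ofReal τ)⁻¹ * (2 * C), by finiteness, fun c E hc h => ?_⟩
  refine eHSq_le_of_forall_lowPass_le fun N => ?_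
  set b := lowPass N c
  have b_mem : b ∈ lowModes N := lowPass_mem_lowModes hc N
  have b_fin : FinH σ b := (memHinf_of_mem_lowModes b_mem σ).2
  set g := τ • fracLap σ b with hg
  have g_mem : g ∈ lowModes N := (lowModes N).smul_mem τ (fracLap_mem_lowModes b_mem σ)
  have pairing : ‖innerC c g‖ₑ = ENNReal.ofReal τ * eHSq σ b := by
    have same : innerC c g = innerC b g := innerC_congr_left fun k hk =>
      (lowPass_apply_of_le (not_lt.1 fun hlt => hk (g_mem.2 k hlt)) c).symm
    rw [same, hg, innerC_smul_right, innerC_fracLap_self, enorm_mul, eHSq_eq_ofReal b_fin,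
      ← ofReal_norm, ← ofReal_norm, Complex.norm_of_nonneg hτ.le,
      Complex.norm_of_nonneg (hSq_nonneg σ b)]
  have dual : eHSq (-σ) g = ENNReal.ofReal τ ^ 2 * eHSq σ b := by
    rw [hg, eHSq_smul, eHSq_fracLap, Real.enorm_of_nonneg hτ.le]
    ring_nf
  have bound := h N g g_mem
  rw [pairing, dual] at bound
  rw [mul_assoc, ← ENNReal.mul_le_iff_le_inv hτ₀ ENNReal.ofReal_ne_top]
  refine ennreal_le_of_two_mul_le_add
    (ENNReal.mul_ne_top ENNReal.ofReal_ne_top (finH_iff.1 b_fin)) ?_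
  calc 2 * (ENNReal.ofReal τ * eHSq σ b)
      ≤ 2 * (C * (E + ENNReal.ofReal τ ^ 2 * eHSq σ b)) := by gcongr
    _ = 2 * C * E + ENNReal.ofReal τ * (2 * C) * (ENNReal.ofReal τ * eHSq σ b) := by ring
    _ ≤ 2 * C * E + 1 * (ENNReal.ofReal τ * eHSq σ b) := by gcongr
    _ = 2 * C * E + ENNReal.ofReal τ * eHSq σ b := by rw [one_mul]

/-! ### The information form up to a smoothing remainder -/

lemma lamPow_neg_one_mul_le {p q : ℝ} (h : -2 ≤ p + q) (k : Freq) (x y : ℝ≥0∞) :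
    lamPow (-1) k * (x * y) ≤ lamPow p k * x ^ 2 + lamPow q k * y ^ 2 := by
  have split_sq : ∀ r, lamPow (r / 2) k ^ 2 = lamPow r k := fun r => by
    rw [lamPow_sq, mul_div_cancel₀ _ two_ne_zero]
  calc lamPow (-1) k * (x * y) ≤ lamPow ((p + q) / 2) k * (x * y) := by
        gcongr
        exact lamPow_mono (by linarith) k
    _ = lamPow (p / 2) k * x * (lamPow (q / 2) k * y) := by rw [add_div, ← lamPow_mul]; ring
    _ ≤ (lamPow (p / 2) k * x) ^ 2 + (lamPow (q / 2) k * y) ^ 2 := ennreal_mul_le_add_sq _ _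
    _ = lamPow p k * x ^ 2 + lamPow q k * y ^ 2 := by rw [mul_pow, mul_pow, split_sq, split_sq]

lemma tsum_lamPow_neg_one_mul_le {p q : ℝ} (h : -2 ≤ p + q) (c d : Coef) :
    ∑' k, lamPow (-1) k * (‖c k‖ₑ * ‖d k‖ₑ) ≤ eHSq p c + eHSq q d := by
  rw [eHSq, eHSq, ← ENNReal.tsum_add]
  exact ENNReal.tsum_le_tsum fun k => lamPow_neg_one_mul_le h k _ _

section ScalarPairing

variable {w v G H : ℝ → ℂ} {μ t₀ t₁ : ℝ}

lemma integrableOn_mul_conj_left (hG : IntegrableOn G (Ioc t₀ t₁))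
    (hv : ContinuousOn v (Icc t₀ t₁)) : IntegrableOn (fun t => G t * conj (v t)) (Ioc t₀ t₁) := by
  rw [← integrableOn_Icc_iff_integrableOn_Ioc] at hG ⊢
  exact hG.mul_continuousOn (Complex.continuous_conj.comp_continuousOn hv) isCompact_Icc

lemma integrableOn_mul_conj_right (hw : ContinuousOn w (Icc t₀ t₁))
    (hH : IntegrableOn H (Ioc t₀ t₁)) : IntegrableOn (fun t => w t * conj (H t)) (Ioc t₀ t₁) := by
  have hH' : IntegrableOn (fun t => conj (H t)) (Ioc t₀ t₁) :=
    (Complex.conjCLE.toContinuousLinearMap.integrable_comp hH :)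
  rw [← integrableOn_Icc_iff_integrableOn_Ioc] at hH' ⊢
  exact hH'.continuousOn_mul hw isCompact_Icc

lemma integral_mul_conj_eq_sub (h01 : t₀ ≤ t₁)
    (hw : ContinuousOn w (Icc t₀ t₁)) (hv : ContinuousOn v (Icc t₀ t₁))
    (hw' : ∀ t ∈ Ioo t₀ t₁, HasDerivAt w (G t - μ • w t) t)
    (hv' : ∀ t ∈ Ioo t₀ t₁, HasDerivAt v (H t - μ • v t) t)
    (hG : IntegrableOn G (Ioc t₀ t₁)) (hH : IntegrableOn H (Ioc t₀ t₁)) :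
    (∫ t in Ioc t₀ t₁, G t * conj (v t)) + (∫ t in Ioc t₀ t₁, w t * conj (H t)) -
        2 * (μ : ℂ) * ∫ t in Ioc t₀ t₁, w t * conj (v t) =
      w t₁ * conj (v t₁) - w t₀ * conj (v t₀) := by
  have hv_conj : ContinuousOn (fun t => conj (v t)) (Icc t₀ t₁) :=
    Complex.continuous_conj.comp_continuousOn hv
  have hGv := integrableOn_mul_conj_left hG hv
  have hwH := integrableOn_mul_conj_right hw hH
  have hwv : IntegrableOn (fun t => w t * conj (v t)) (Ioc t₀ t₁) :=
    ((hw.mul hv_conj).integrableOn_compact isCompact_Icc).mono_set Ioc_subset_Icc_self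
  have hsum : IntegrableOn (fun t => G t * conj (v t) + w t * conj (H t)) (Ioc t₀ t₁) := hGv.add hwH
  rw [← integral_add hGv hwH, ← integral_const_mul, ← integral_sub hsum (hwv.const_mul _),
    ← intervalIntegral.integral_of_le h01]
  refine intervalIntegral.integral_eq_sub_of_hasDerivAt_of_le h01 (hw.mul hv_conj)
    (fun t ht => ?_) ?_
  · refine ((hw' t ht).mul (hv' t ht).star).congr_deriv ?_
    simp only [← starRingEnd_apply, Complex.real_smul, map_sub, map_mul, Complex.conj_ofReal]
    ring
  · rw [intervalIntegrable_iff_integrableOn_Ioc_of_le h01]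
    exact hsum.sub (hwv.const_mul _)

end ScalarPairing

/-- The `k`-th Fourier contribution to `⟨Λ⁻¹W(0), V(0)⟩ - 2ν ∫₀ᵀ ⟨W(t), V(t)⟩ dt`, where `Λ = -Δ`.
It vanishes up to the final time when `W` and `V` solve the unforced heat equation. -/
def pairingDefect (ν T : ℝ) (W V : ℝ → Coef) (k : Freq) : ℂ :=
  fracLap (-1) (W 0) k * conj (V 0 k) -
    2 * (ν : ℂ) * ∫ t in Ioc 0 T, W t k * conj (V t k)

lemma tsum_lintegral_lamPow_neg_one_mul_le {s : Set ℝ} {A B : ℝ → Coef} {p q : ℝ}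
    (hA : ∀ k, AEStronglyMeasurable (fun t => A t k) (volume.restrict s))
    (hB : ∀ k, AEStronglyMeasurable (fun t => B t k) (volume.restrict s)) (h : -2 ≤ p + q) :
    ∑' k, ∫⁻ t in s, lamPow (-1) k * (‖A t k‖ₑ * ‖B t k‖ₑ) ≤
      (∫⁻ t in s, eHSq p (A t)) + ∫⁻ t in s, eHSq q (B t) := by
  rw [← lintegral_tsum (f := fun k t => lamPow (-1) k * (‖A t k‖ₑ * ‖B t k‖ₑ))
    fun k => ((hA k).enorm.mul (hB k).enorm).const_mul _]
  have hmeas : AEMeasurable (fun t => eHSq p (A t)) (volume.restrict s) :=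
    AEMeasurable.tsum fun k => ((hA k).enorm.pow_const 2).const_mul _
  rw [← lintegral_add_left' hmeas]
  exact lintegral_mono fun t => tsum_lamPow_neg_one_mul_le h _ _

namespace IsPerturbedHeatSol

variable {ν T R : ℝ} {C₀ : ℝ≥0∞} {W N V H : ℝ → Coef}

lemma lintegral_eHSq_zero_ne_top (h : IsPerturbedHeatSol ν T R C₀ W N) :
    ∫⁻ t in Ioc 0 T, eHSq 0 (W t) ≠ ∞ :=
  ne_top_of_le_ne_top h.lintegral_ne_top (lintegral_mono fun _ => eHSq_mono zero_le_one _)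

lemma integrableOn_source (h : IsPerturbedHeatSol ν T R C₀ W N) (hC₀ : C₀ ≠ ∞) (hR : 0 ≤ R)
    (k : Freq) : IntegrableOn (fun t => N t k) (Ioc 0 T) := by
  have hfin := h.lintegral_eHSq_zero_ne_top
  have hsource : ∫⁻ t in Ioc 0 T, eHSq (0 - 1) (N t) ≠ ∞ := ne_top_of_le_ne_top (by finiteness)
    (h.lintegral_source_le hC₀ (by rwa [abs_zero]) le_rfl le_rfl)
  rw [h.lintegral_eHSq_source_eq le_rfl le_rfl] at hsource
  have hmode : ∫⁻ t in Ioc 0 T, ‖N t k‖ₑ ^ 2 ≠ ∞ := fun htop =>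
    ENNReal.ne_top_of_tsum_ne_top hsource k (by rw [htop, ENNReal.mul_top (lamPow_ne_zero _ k)])
  have hmeas := h.aestronglyMeasurable_source le_rfl le_rfl k
  exact ((memLp_two_iff_integrable_sq_norm hmeas).2
    (integrable_norm_sq_of_lintegral_ne_top hmeas hmode)).integrable one_le_two

lemma enorm_pairingDefect_le (hW : IsPerturbedHeatSol ν T R C₀ W N)
    (hV : IsPerturbedHeatSol ν T R C₀ V H) (hT : 0 ≤ T) (hC₀ : C₀ ≠ ∞) (hR : 0 ≤ R) (k : Freq) :
    ‖pairingDefect ν T W V k‖ₑ ≤ lamPow (-1) k * (‖W T k‖ₑ * ‖V T k‖ₑ) +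
      (∫⁻ t in Ioc 0 T, lamPow (-1) k * (‖N t k‖ₑ * ‖V t k‖ₑ)) +
      ∫⁻ t in Ioc 0 T, lamPow (-1) k * (‖W t k‖ₑ * ‖H t k‖ₑ) := by
  have identity := integral_mul_conj_eq_sub hT (hW.continuousOn k) (hV.continuousOn k)
    (fun t ht => hW.hasDerivAt k t ⟨ht.1, ht.2.le⟩) (fun t ht => hV.hasDerivAt k t ⟨ht.1, ht.2.le⟩)
    (hW.integrableOn_source hC₀ hR k) (hV.integrableOn_source hC₀ hR k)
  have defect_eq : pairingDefect ν T W V k =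
      lam k ^ (-1 : ℝ) • (W T k * conj (V T k)) -
        lam k ^ (-1 : ℝ) • (∫ t in Ioc 0 T, N t k * conj (V t k)) -
        lam k ^ (-1 : ℝ) • (∫ t in Ioc 0 T, W t k * conj (H t k)) := by
    have hlam : (lam k : ℂ) ≠ 0 := by exact_mod_cast (lam_pos k).ne'
    simp only [pairingDefect, fracLap, Real.rpow_neg_one, Complex.real_smul]
    push_cast at identity ⊢
    field_simp
    linear_combination identity
  have integral_le : ∀ A B : ℝ → ℂ,
      ‖lam k ^ (-1 : ℝ) • (∫ t in Ioc 0 T, A t * conj (B t))‖ₑ ≤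
        ∫⁻ t in Ioc 0 T, lamPow (-1) k * (‖A t‖ₑ * ‖B t‖ₑ) := by
    intro A B
    rw [enorm_lam_rpow_smul, lintegral_const_mul' _ _ (lamPow_ne_top _ k)]
    gcongr
    refine (enorm_integral_le_lintegral_enorm _).trans_eq ?_
    simp only [enorm_mul, enorm_conj]
  rw [defect_eq]
  refine enorm_sub_le.trans (add_le_add (enorm_sub_le.trans
    (add_le_add ?_ (integral_le _ _))) (integral_le _ _))
  rw [enorm_lam_rpow_smul, enorm_mul, enorm_conj]

lemma tsum_lintegral_enorm_mul_conj_ne_top (hW : IsPerturbedHeatSol ν T R C₀ W N)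
    (hV : IsPerturbedHeatSol ν T R C₀ V H) :
    ∑' k, ∫⁻ t in Ioc 0 T, ‖W t k * conj (V t k)‖ₑ ≠ ∞ := by
  have hW0 := hW.lintegral_eHSq_zero_ne_top
  have hV0 := hV.lintegral_eHSq_zero_ne_top
  refine ne_top_of_le_ne_top (b := (∫⁻ t in Ioc 0 T, eHSq 0 (W t)) + ∫⁻ t in Ioc 0 T, eHSq 0 (V t))
    (by finiteness) ?_
  rw [hW.lintegral_eHSq_eq le_rfl le_rfl, hV.lintegral_eHSq_eq le_rfl le_rfl, ← ENNReal.tsum_add]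
  refine ENNReal.tsum_le_tsum fun k => ?_
  have hmeas : AEMeasurable (fun t => ‖W t k‖ₑ ^ 2) (volume.restrict (Ioc 0 T)) :=
    (hW.aestronglyMeasurable le_rfl le_rfl k).enorm.pow_const 2
  rw [lamPow_zero, one_mul, one_mul, ← lintegral_add_left' hmeas]
  refine lintegral_mono fun t => ?_
  rw [enorm_mul, enorm_conj]
  exact ennreal_mul_le_add_sq _ _

lemma innerC_sub_integral_eq (hW : IsPerturbedHeatSol ν T R C₀ W N)
    (hV : IsPerturbedHeatSol ν T R C₀ V H) :
    innerC (fracLap (-1) (W 0)) (V 0) -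
        2 * (ν : ℂ) * ∫ t in Ioc 0 T, innerC (W t) (V t) =
      ∑' k, pairingDefect ν T W V k := by
  have hmeas : ∀ k,
      AEStronglyMeasurable (fun t => W t k * conj (V t k)) (volume.restrict (Ioc 0 T)) :=
    fun k => (hW.aestronglyMeasurable le_rfl le_rfl k).mul
      (Complex.continuous_conj.comp_aestronglyMeasurable
        (hV.aestronglyMeasurable le_rfl le_rfl k))
  have hfin := tsum_lintegral_enorm_mul_conj_ne_top hW hV
  have summable_init : Summable fun k => fracLap (-1) (W 0) k * conj (V 0 k) := by
    have hW0 := hW.init_ne_top 0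
    have hV0 := hV.init_ne_top 0
    refine Summable.of_enorm (ne_top_of_le_ne_top (b := eHSq 0 (W 0) + eHSq 0 (V 0))
      (by finiteness) ?_)
    simp only [enorm_mul, fracLap, enorm_lam_rpow_smul, enorm_conj, mul_assoc]
    exact tsum_lamPow_neg_one_mul_le (by norm_num) _ _
  have summable_integral : Summable fun k => ∫ t in Ioc 0 T, W t k * conj (V t k) :=
    Summable.of_enorm (ne_top_of_le_ne_top hfin
      (ENNReal.tsum_le_tsum fun k => enorm_integral_le_lintegral_enorm _))
  unfold innerC
  rw [integral_tsum hmeas hfin, ← tsum_mul_left,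
    ← summable_init.tsum_sub (summable_integral.mul_left _)]
  rfl

lemma tsum_lintegral_source_le {s r : ℝ} (hW : IsPerturbedHeatSol ν T R C₀ W N)
    (hV : IsPerturbedHeatSol ν T R C₀ V H) (hC₀ : C₀ ≠ ∞) (hs : |s + 1| ≤ R) (hsr : -3 ≤ s + r) :
    ∑' k, ∫⁻ t in Ioc 0 T, lamPow (-1) k * (‖N t k‖ₑ * ‖V t k‖ₑ) ≤
      C₀ * (∫⁻ t in Ioc 0 T, eHSq (s + 1) (W t)) + ∫⁻ t in Ioc 0 T, eHSq (r + 1) (V t) :=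
  (tsum_lintegral_lamPow_neg_one_mul_le (p := s + 1 - 1) (q := r + 1)
    (hW.aestronglyMeasurable_source le_rfl le_rfl) (hV.aestronglyMeasurable le_rfl le_rfl)
    (by linarith)).trans (by gcongr; exact hW.lintegral_source_le hC₀ hs le_rfl le_rfl)

end IsPerturbedHeatSol

lemma exists_enorm_innerC_sub_integral_le {ν T R s r : ℝ} {C₀ : ℝ≥0∞} (hν : 0 < ν)
    (hT : 0 < T) (hC₀ : C₀ ≠ ∞) (hsr : -3 ≤ s + r) (hs : |s| ≤ R) (hs1 : |s + 1| ≤ R)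
    (hr : |r| ≤ R) (hr1 : |r + 1| ≤ R) :
    ∃ C ≠ ∞, ∀ W N V H, IsPerturbedHeatSol ν T R C₀ W N → IsPerturbedHeatSol ν T R C₀ V H →
      ‖innerC (fracLap (-1) (W 0)) (V 0) -
          2 * (ν : ℂ) * ∫ t in Ioc 0 T, innerC (W t) (V t)‖ₑ ≤
        C * (eHSq s (W 0) + eHSq r (V 0)) := by
  obtain ⟨K₁, hK₁, stable_s⟩ := energyStable hν hT.le hC₀ hs
  obtain ⟨K₂, hK₂, stable_r⟩ := energyStable hν hT.le hC₀ hr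
  obtain ⟨K₃, hK₃, smoothing_r⟩ := exists_eHSq_final_le hν hT hC₀ hr hr1
  set P := K₁ + C₀ * K₁ + K₁
  set Q := K₃ + K₂ + C₀ * K₂
  refine ⟨P + Q, by finiteness, fun W N V H hW hV => ?_⟩
  obtain ⟨sup_W, int_W⟩ := stable_s _ _ hW
  obtain ⟨-, int_V⟩ := stable_r _ _ hV
  have final_le : ∑' k, lamPow (-1) k * (‖W T k‖ₑ * ‖V T k‖ₑ) ≤
      K₁ * eHSq s (W 0) + K₃ * eHSq r (V 0) :=
    (tsum_lamPow_neg_one_mul_le (p := s) (q := r + 1) (by linarith) _ _).trans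
      (add_le_add (sup_W T ⟨hT.le, le_rfl⟩) (smoothing_r _ _ hV))
  have source_W_le : ∑' k, ∫⁻ t in Ioc 0 T, lamPow (-1) k * (‖N t k‖ₑ * ‖V t k‖ₑ) ≤
      C₀ * (K₁ * eHSq s (W 0)) + K₂ * eHSq r (V 0) :=
    (hW.tsum_lintegral_source_le hV hC₀ hs1 hsr).trans (by gcongr)
  have source_V_le : ∑' k, ∫⁻ t in Ioc 0 T, lamPow (-1) k * (‖W t k‖ₑ * ‖H t k‖ₑ) ≤
      K₁ * eHSq s (W 0) + C₀ * (K₂ * eHSq r (V 0)) := by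
    simp only [mul_comm ‖W _ _‖ₑ]
    rw [add_comm]
    exact (hV.tsum_lintegral_source_le (r := s) hW hC₀ hr1 (by linarith)).trans (by gcongr)
  rw [hW.innerC_sub_integral_eq hV]
  calc ‖∑' k, pairingDefect ν T W V k‖ₑ
      ≤ ∑' k, ‖pairingDefect ν T W V k‖ₑ := enorm_tsum_le_tsum_enorm
    _ ≤ _ := ENNReal.tsum_le_tsum fun k =>
        hW.enorm_pairingDefect_le hV hT.le hC₀ ((abs_nonneg _).trans hs) k
    _ ≤ (K₁ * eHSq s (W 0) + K₃ * eHSq r (V 0)) +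
          (C₀ * (K₁ * eHSq s (W 0)) + K₂ * eHSq r (V 0)) +
          (K₁ * eHSq s (W 0) + C₀ * (K₂ * eHSq r (V 0))) := by
        rw [ENNReal.tsum_add, ENNReal.tsum_add]
        gcongr
    _ = P * eHSq s (W 0) + Q * eHSq r (V 0) := by ring
    _ ≤ (P + Q) * (eHSq s (W 0) + eHSq r (V 0)) := by
        rw [mul_add]
        gcongr
        exacts [le_self_add, le_add_self]

/-! ### Coercive perturbations of the inverse Laplacian -/

lemma IsLinMap.sub {M : Coef → Coef} (hM : IsLinMap M) (c d : Coef) : M (c - d) = M c - M d := by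
  have add := hM.1 (c - d) d
  rw [sub_add_cancel] at add
  exact eq_sub_of_add_eq add.symm

lemma hN_le_mul_hN_iff {σ τ C : ℝ} {c d : Coef} (hc : FinH σ c) (hd : FinH τ d) (hC : 0 ≤ C) :
    hN σ c ≤ C * hN τ d ↔ eHSq σ c ≤ ENNReal.ofReal (C ^ 2) * eHSq τ d := by
  rw [eHSq_eq_ofReal_hN_sq hc, eHSq_eq_ofReal_hN_sq hd, ← ENNReal.ofReal_mul (sq_nonneg C),
    ← mul_pow, ENNReal.ofReal_le_ofReal_iff (sq_nonneg _)]
  exact (pow_le_pow_iff_left₀ (Real.sqrt_nonneg _) (mul_nonneg hC (Real.sqrt_nonneg _))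
    two_ne_zero).symm

lemma tendsto_const_mul_nhds_zero {ι : Type*} {l : Filter ι} {C : ℝ≥0∞} (hC : C ≠ ∞)
    {φ : ι → ℝ≥0∞} (hφ : Tendsto φ l (𝓝 0)) : Tendsto (fun i => C * φ i) l (𝓝 0) := by
  simpa only [mul_zero] using ENNReal.Tendsto.const_mul hφ (Or.inr hC)

lemma innerC_sub_smul_left {N : ℝ} {g : Coef} (hg : g ∈ lowModes N) (r : ℝ) (c d : Coef) :
    innerC (c - r • d) g = innerC c g - r * innerC d g := by
  have summable_pairing (c : Coef) : Summable fun k => c k * conj (g k) :=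
    summable_of_forall_lam_gt (N := N) fun k hk => by rw [hg.2 k hk, map_zero, mul_zero]
  rw [innerC, innerC, innerC, ← tsum_mul_left,
    ← (summable_pairing c).tsum_sub ((summable_pairing d).mul_left _)]
  refine tsum_congr fun k => ?_
  rw [Pi.sub_apply, Pi.smul_apply, Complex.real_smul]
  ring

/-- The defect `(-Δ)⁻¹ ξ - μ M ξ` between the inverse Laplacian and a multiple of `M`. -/
def remainder (μ : ℝ) (M : Coef → Coef) (ξ : Coef) : Coef := fracLap (-1) ξ - μ • M ξ

lemma exists_eHSq_remainder_le {μ s σ : ℝ} {M : Coef → Coef}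
    (hreal : ∀ ξ, MemHinf ξ → IsReal (M ξ)) {C : ℝ≥0∞} (hC : C ≠ ∞)
    (h : ∀ ξ g, MemHinf ξ → MemHinf g →
      ‖innerC (fracLap (-1) ξ) g - μ * innerC (M ξ) g‖ₑ ≤ C * (eHSq s ξ + eHSq (-σ) g)) :
    ∃ C' ≠ (∞ : ℝ≥0∞), ∀ ξ, MemHinf ξ → eHSq σ (remainder μ M ξ) ≤ C' * eHSq s ξ := by
  obtain ⟨C', hC', dual⟩ := exists_eHSq_le_of_enorm_innerC_le σ hC
  refine ⟨C', hC', fun ξ hξ => dual _ _ ?_ fun N g hg => ?_⟩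
  · exact ((hξ 0).1.fracLap (-1)).sub ((hreal ξ hξ).smul μ)
  · rw [remainder, innerC_sub_smul_left hg]
    exact h ξ g hξ (memHinf_of_mem_lowModes hg)

/-- `M` is a bounded operator `Ḣ^a → Ḣ^{a+2}` whose quadratic form controls the `Ḣ⁻¹`-norm and
which coincides with `μ⁻¹ (-Δ)⁻¹` up to an operator gaining `δ` further derivatives. -/
structure IsCoercivePerturbation (μ δ a : ℝ) (M : Coef → Coef) : Prop where
  ne_zero : μ ≠ 0
  gain_pos : 0 < δ
  neg_one_le : -1 ≤ a
  isLinMap : IsLinMap M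
  memH : ∀ ξ, MemH a ξ → MemH (a + 2) (M ξ)
  bounded : ∃ C ≠ (∞ : ℝ≥0∞), ∀ ξ, MemH a ξ → eHSq (a + 2) (M ξ) ≤ C * eHSq a ξ
  coercive : ∃ C ≠ (∞ : ℝ≥0∞), ∀ ξ, MemHinf ξ → eHSq (-1) ξ ≤ C * ‖innerC (M ξ) ξ‖ₑ
  remainder_le : ∀ s ∈ Icc (-1) a, ∃ C ≠ (∞ : ℝ≥0∞), ∀ ξ, MemHinf ξ →
    eHSq (s + 2 + δ) (remainder μ M ξ) ≤ C * eHSq s ξ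

section Galerkin

variable {μ δ a N : ℝ} {M : Coef → Coef} {ξ g : Coef}

lemma lowPass_eq_iff {c d : Coef} : lowPass N c = lowPass N d ↔ ∀ k, lam k ≤ N → c k = d k := by
  refine ⟨fun h k hk => ?_, fun h => funext fun k => ?_⟩
  · rw [← lowPass_apply_of_le hk c, h, lowPass_apply_of_le hk]
  · rcases le_or_gt (lam k) N with hk | hk
    · rw [lowPass_apply_of_le hk, lowPass_apply_of_le hk, h k hk]
    · rw [lowPass_apply_of_lt hk, lowPass_apply_of_lt hk]

lemma lam_le_of_mem_lowModes (hξ : ξ ∈ lowModes N) {k : Freq} (hk : ξ k ≠ 0) : lam k ≤ N :=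
  not_lt.1 fun hlt => hk (hξ.2 k hlt)

lemma eHSq_le_add_remainder (hg : ∀ k, ξ k ≠ 0 → M ξ k = g k) :
    eHSq a ξ ≤ 2 * (‖μ‖ₑ ^ 2 * eHSq (a + 2) g) + 2 * eHSq (a + 2) (remainder μ M ξ) := by
  have pointwise : ∀ k, ‖fracLap (-1) ξ k‖ₑ ≤ ‖(μ • g + remainder μ M ξ) k‖ₑ := fun k => by
    by_cases hk : ξ k = 0
    · rw [fracLap, hk, smul_zero, enorm_zero]
      exact zero_le
    · rw [Pi.add_apply, Pi.smul_apply, remainder, Pi.sub_apply, Pi.smul_apply, hg k hk,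
        add_sub_cancel]
  calc eHSq a ξ = eHSq (a + 2) (fracLap (-1) ξ) := by rw [eHSq_fracLap]; ring_nf
    _ ≤ eHSq (a + 2) (μ • g + remainder μ M ξ) := eHSq_le_of_enorm_le pointwise
    _ ≤ 2 * (‖μ‖ₑ ^ 2 * eHSq (a + 2) g) + 2 * eHSq (a + 2) (remainder μ M ξ) := by
      rw [← eHSq_smul]
      exact eHSq_add_le _ _ _

namespace IsCoercivePerturbation

lemma exists_eHSq_neg_one_le (h : IsCoercivePerturbation μ δ a M) :
    ∃ C ≠ (∞ : ℝ≥0∞), ∀ ξ g, MemHinf ξ → (∀ k, ξ k ≠ 0 → M ξ k = g k) →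
      eHSq (-1) ξ ≤ C * eHSq 1 g := by
  obtain ⟨C, hC, coercive⟩ := h.coercive
  refine ⟨C ^ 2, by finiteness, fun ξ g hξ hg => ?_⟩
  refine ennreal_le_of_two_mul_le_add (finH_iff.1 (hξ (-1)).2) ?_
  calc 2 * eHSq (-1) ξ ≤ 2 * (C * ‖innerC g ξ‖ₑ) := by
        rw [← innerC_congr_left hg]
        gcongr
        exact coercive ξ hξ
    _ ≤ C ^ 2 * eHSq 1 g + eHSq (-1) ξ := two_mul_enorm_innerC_le 1 C g ξ

/-- The remainder is interpolated between `Ḣ^{a+2+δ}`, where it is absorbed, and `Ḣ^{1+δ}`, where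
coercivity controls it. -/
lemma exists_eHSq_le (h : IsCoercivePerturbation μ δ a M) :
    ∃ C ≠ (∞ : ℝ≥0∞), ∀ ξ g, MemHinf ξ → (∀ k, ξ k ≠ 0 → M ξ k = g k) →
      eHSq a ξ ≤ C * eHSq (a + 2) g := by
  obtain ⟨C₀, hC₀, low⟩ := h.exists_eHSq_neg_one_le
  obtain ⟨C₁, hC₁, remainder_low⟩ := h.remainder_le (-1) ⟨le_rfl, h.neg_one_le⟩
  obtain ⟨C₂, hC₂, remainder_high⟩ := h.remainder_le a ⟨h.neg_one_le, le_rfl⟩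
  obtain ⟨ε, hε, hεC⟩ := exists_pos_ofReal_mul_le_one (C := 4 * C₂) (by finiteness)
  obtain ⟨C₃, hC₃, interpolate⟩ :=
    exists_eHSq_le_add (lt_add_of_pos_right (a + 2) h.gain_pos) (-1 + 2 + δ) hε
  refine ⟨4 * ‖μ‖ₑ ^ 2 + 4 * (C₃ * (C₁ * C₀)), by finiteness, fun ξ g hξ hg => ?_⟩
  refine ennreal_le_of_two_mul_le_add (finH_iff.1 (hξ a).2) ?_
  have low_le : eHSq (-1) ξ ≤ C₀ * eHSq (a + 2) g :=
    (low ξ g hξ hg).trans (by gcongr; exact eHSq_mono (by linarith [h.neg_one_le]) g)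
  have remainder_le : eHSq (a + 2) (remainder μ M ξ) ≤
      ENNReal.ofReal ε * (C₂ * eHSq a ξ) + C₃ * (C₁ * (C₀ * eHSq (a + 2) g)) :=
    (interpolate _).trans <| by
      gcongr
      · exact remainder_high ξ hξ
      · exact (remainder_low ξ hξ).trans (by gcongr)
  calc 2 * eHSq a ξ
      ≤ 2 * (2 * (‖μ‖ₑ ^ 2 * eHSq (a + 2) g) + 2 * eHSq (a + 2) (remainder μ M ξ)) := by
        gcongr
        exact eHSq_le_add_remainder hg
    _ ≤ 2 * (2 * (‖μ‖ₑ ^ 2 * eHSq (a + 2) g) +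
          2 * (ENNReal.ofReal ε * (C₂ * eHSq a ξ) + C₃ * (C₁ * (C₀ * eHSq (a + 2) g)))) := by
        gcongr
    _ = (4 * ‖μ‖ₑ ^ 2 + 4 * (C₃ * (C₁ * C₀))) * eHSq (a + 2) g +
          ENNReal.ofReal ε * (4 * C₂) * eHSq a ξ := by ring
    _ ≤ (4 * ‖μ‖ₑ ^ 2 + 4 * (C₃ * (C₁ * C₀))) * eHSq (a + 2) g + eHSq a ξ := by
        gcongr
        exact mul_le_of_le_one_left zero_le hεC

lemma isReal_map (h : IsCoercivePerturbation μ δ a M) {ξ : Coef} (hξ : MemHinf ξ) :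
    IsReal (M ξ) := (h.memH ξ (hξ a)).1

lemma exists_eHSq_le_map (h : IsCoercivePerturbation μ δ a M) :
    ∃ C ≠ (∞ : ℝ≥0∞), ∀ ξ, MemH a ξ → eHSq a ξ ≤ C * eHSq (a + 2) (M ξ) := by
  obtain ⟨C, hC, lower⟩ := h.exists_eHSq_le
  obtain ⟨C₁, hC₁, upper⟩ := h.bounded
  refine ⟨4 * C, by finiteness, fun ξ hξ => ?_⟩
  have approx : ∀ N, eHSq a ξ ≤ 4 * C * eHSq (a + 2) (M ξ) +
      (4 * C * C₁ + 2) * eHSq a (highPass N ξ) := fun N => by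
    set η := lowPass N ξ with hη
    have η_mem : MemHinf η := memHinf_of_mem_lowModes (lowPass_mem_lowModes hξ.1 N)
    rw [highPass_eq_sub, ← hη]
    have Mη_le : eHSq (a + 2) (M η) ≤
        2 * eHSq (a + 2) (M ξ) + 2 * (C₁ * eHSq a (ξ - η)) := by
      have split := eHSq_sub_le (a + 2) (M ξ) (M (ξ - η))
      rw [← h.isLinMap.sub, sub_sub_cancel] at split
      exact split.trans (by gcongr; exact upper _ (hξ.sub (η_mem a)))
    calc eHSq a ξ ≤ 2 * eHSq a η + 2 * eHSq a (ξ - η) := by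
          simpa only [add_sub_cancel] using eHSq_add_le a η (ξ - η)
      _ ≤ 2 * (C * (2 * eHSq (a + 2) (M ξ) + 2 * (C₁ * eHSq a (ξ - η)))) +
            2 * eHSq a (ξ - η) := by
          gcongr
          exact (lower η _ η_mem fun _ _ => rfl).trans (by gcongr)
      _ = 4 * C * eHSq (a + 2) (M ξ) + (4 * C * C₁ + 2) * eHSq a (ξ - η) := by ring
  have limit := (tendsto_const_mul_nhds_zero (C := 4 * C * C₁ + 2) (by finiteness)
    (tendsto_eHSq_highPass hξ.2)).const_add (4 * C * eHSq (a + 2) (M ξ))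
  rw [add_zero] at limit
  exact ge_of_tendsto' limit approx

lemma exists_galerkin (h : IsCoercivePerturbation μ δ a M) (N : ℝ)
    (hg : IsReal g) : ∃ ξ ∈ lowModes N, lowPass N (M ξ) = lowPass N g := by
  let compress : lowModes N →ₗ[ℝ] lowModes N :=
    { toFun := fun ξ => ⟨lowPass N (M ξ),
        lowPass_mem_lowModes (h.isReal_map (memHinf_of_mem_lowModes ξ.2)) N⟩
      map_add' := fun ξ η => Subtype.ext <| by
        simp only [Submodule.coe_add, h.isLinMap.1, lowPass_add]
      map_smul' := fun r ξ => Subtype.ext <| by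
        simp only [Submodule.coe_smul, h.isLinMap.2, lowPass_smul, RingHom.id_apply] }
  have injective : Function.Injective compress := by
    rw [← LinearMap.ker_eq_bot, LinearMap.ker_eq_bot']
    intro ξ hξ
    have vanish : lowPass N (M ξ) = lowPass N 0 :=
      (congrArg Subtype.val hξ).trans (indicator_zero' _).symm
    obtain ⟨C, -, lower⟩ := h.exists_eHSq_le
    have bound := lower ξ 0 (memHinf_of_mem_lowModes ξ.2) fun k hk =>
      lowPass_eq_iff.1 vanish k (lam_le_of_mem_lowModes ξ.2 hk)
    rw [eHSq_eq_zero.2 rfl, mul_zero, nonpos_iff_eq_zero] at bound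
    exact Subtype.ext (eHSq_eq_zero.1 bound)
  obtain ⟨ξ, hξ⟩ := LinearMap.injective_iff_surjective.1 injective
    ⟨lowPass N g, lowPass_mem_lowModes hg N⟩
  exact ⟨ξ, ξ.2, congrArg Subtype.val hξ⟩

end IsCoercivePerturbation

lemma eHSq_map_sub_le (hμ : μ ≠ 0) (σ : ℝ) (hξ : ξ ∈ lowModes N)
    (hg : lowPass N (M ξ) = lowPass N g) :
    eHSq σ (M ξ - g) ≤ 2 * (‖μ⁻¹‖ₑ ^ 2 * eHSq σ (highPass N (remainder μ M ξ))) +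
      2 * eHSq σ (highPass N g) := by
  have pointwise : M ξ - g = -(μ⁻¹ • highPass N (remainder μ M ξ)) - highPass N g := by
    funext k
    simp only [Pi.sub_apply, Pi.neg_apply, Pi.smul_apply]
    rcases le_or_gt (lam k) N with hk | hk
    · rw [highPass_apply_of_le hk, highPass_apply_of_le hk, lowPass_eq_iff.1 hg k hk, sub_self,
        smul_zero, neg_zero, sub_zero]
    · rw [highPass_apply_of_lt hk, highPass_apply_of_lt hk, remainder, Pi.sub_apply, Pi.smul_apply,
        fracLap, hξ.2 k hk, smul_zero, zero_sub, smul_neg, neg_neg, inv_smul_smul₀ hμ]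
  rw [pointwise, ← eHSq_smul, ← eHSq_neg σ (μ⁻¹ • _)]
  exact eHSq_sub_le _ _ _

lemma exists_tendsto_eHSq_sub {ι : Type*} {l : Filter ι} [l.NeBot] {σ : ℝ} {X : ι → Coef}
    (hX : ∀ i, MemH σ (X i)) {ρ : ι → ℝ≥0∞} (hρ : Tendsto ρ l (𝓝 0))
    (h : ∀ i j, eHSq σ (X i - X j) ≤ ρ i + ρ j) :
    ∃ ξ, MemH σ ξ ∧ Tendsto (fun i => eHSq σ (X i - ξ)) l (𝓝 0) := by
  have coeff : ∀ k, ∃ z, Tendsto (fun i => X i k) l (𝓝 z) := fun k => by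
    refine CompleteSpace.complete (cauchy_map_iff.2 ⟨inferInstance, ?_⟩)
    rw [uniformity_basis_edist.tendsto_right_iff]
    intro ε hε
    have pos : 0 < lamPow σ k * ε ^ 2 :=
      ENNReal.mul_pos (lamPow_ne_zero σ k) (pow_ne_zero 2 hε.ne')
    have sum_zero : Tendsto (fun p : ι × ι => ρ p.1 + ρ p.2) (l ×ˢ l) (𝓝 0) := by
      rw [← add_zero (0 : ℝ≥0∞)]
      exact (hρ.comp tendsto_fst).add (hρ.comp tendsto_snd)
    filter_upwards [sum_zero.eventually (gt_mem_nhds pos)] with p hp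
    have mode := ((lamPow_mul_enorm_sq_le_eHSq σ (X p.1 - X p.2) k).trans (h _ _)).trans_lt hp
    rw [edist_eq_enorm_sub]
    exact lt_of_pow_lt_pow_left' 2 (lt_of_mul_lt_mul_left' mode)
  choose ξ hξ using coeff
  have real : IsReal ξ := fun k => tendsto_nhds_unique (hξ (fneg k)) <| by
    simp only [fun i => (hX i).1 k]
    exact ((Complex.continuous_conj.tendsto _).comp (hξ k)).neg
  have bound : ∀ i, eHSq σ (X i - ξ) ≤ ρ i := fun i =>
    eHSq_le_of_tendsto (fun k => (hξ k).const_sub (X i k))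
      (by simpa only [add_zero] using hρ.const_add (ρ i)) (h i)
  refine ⟨ξ, ⟨real, ?_⟩, tendsto_of_tendsto_of_tendsto_of_le_of_le tendsto_const_nhds hρ
    (fun _ => zero_le) bound⟩
  obtain ⟨i, hi⟩ := (hρ.eventually (gt_mem_nhds ENNReal.zero_lt_top)).exists
  have := (hX i).2.sub (finH_iff.2 ((bound i).trans_lt hi).ne)
  rwa [sub_sub_cancel] at this

namespace IsCoercivePerturbation

lemma exists_approx (h : IsCoercivePerturbation μ δ a M)
    (hg : MemH (a + 2) g) : ∃ X : ℝ → Coef, (∀ N, MemHinf (X N)) ∧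
      Tendsto (fun N => eHSq (a + 2) (M (X N) - g)) atTop (𝓝 0) := by
  choose X X_mem galerkin using fun N => h.exists_galerkin N hg.1
  have X_smooth : ∀ N, MemHinf (X N) := fun N => memHinf_of_mem_lowModes (X_mem N)
  obtain ⟨C, hC, lower⟩ := h.exists_eHSq_le
  obtain ⟨C₁, hC₁, gain⟩ := h.remainder_le a ⟨h.neg_one_le, le_rfl⟩
  have hg' : eHSq (a + 2) g ≠ ∞ := finH_iff.1 hg.2
  have remainder_le : ∀ N, eHSq (a + 2 + δ) (remainder μ M (X N)) ≤
      C₁ * (C * eHSq (a + 2) g) := fun N => (gain _ (X_smooth N)).trans <| by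
    gcongr
    exact lower _ _ (X_smooth N) fun k hk =>
      lowPass_eq_iff.1 (galerkin N) k (lam_le_of_mem_lowModes (X_mem N) hk)
  set B := 2 * (‖μ⁻¹‖ₑ ^ 2 * (C₁ * (C * eHSq (a + 2) g))) with hB
  have bound : ∀ᶠ N in atTop, eHSq (a + 2) (M (X N) - g) ≤
      B * ENNReal.ofReal (N ^ (-δ)) + 2 * eHSq (a + 2) (highPass N g) := by
    filter_upwards [eventually_gt_atTop 0] with N hN
    refine (eHSq_map_sub_le h.ne_zero _ (X_mem N) (galerkin N)).trans (add_le_add_left ?_ _)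
    calc 2 * (‖μ⁻¹‖ₑ ^ 2 * eHSq (a + 2) (highPass N (remainder μ M (X N))))
        ≤ 2 * (‖μ⁻¹‖ₑ ^ 2 * (ENNReal.ofReal (N ^ (-δ)) * (C₁ * (C * eHSq (a + 2) g)))) := by
          gcongr
          exact (eHSq_highPass_le_mul hN h.gain_pos.le _ _).trans (by gcongr; exact remainder_le N)
      _ = B * ENNReal.ofReal (N ^ (-δ)) := by rw [hB]; ring
  have decay : Tendsto (fun N : ℝ => ENNReal.ofReal (N ^ (-δ))) atTop (𝓝 0) := by
    simpa only [ENNReal.ofReal_zero] using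
      ENNReal.tendsto_ofReal (tendsto_rpow_neg_atTop h.gain_pos)
  have limit := (tendsto_const_mul_nhds_zero (show B ≠ ∞ by finiteness) decay).add
    (tendsto_const_mul_nhds_zero (C := 2) (by finiteness) (tendsto_eHSq_highPass hg.2))
  rw [add_zero] at limit
  exact ⟨X, X_smooth, tendsto_of_tendsto_of_tendsto_of_le_of_le' tendsto_const_nhds limit
    (Eventually.of_forall fun _ => zero_le) bound⟩

theorem exists_map_eq (h : IsCoercivePerturbation μ δ a M)
    (hg : MemH (a + 2) g) : ∃ ξ, MemH a ξ ∧ M ξ = g := by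
  obtain ⟨X, X_smooth, approx⟩ := h.exists_approx hg
  obtain ⟨C, hC, lower⟩ := h.exists_eHSq_le_map
  obtain ⟨C₁, hC₁, upper⟩ := h.bounded
  have cauchy : ∀ N L, eHSq a (X N - X L) ≤
      2 * C * eHSq (a + 2) (M (X N) - g) + 2 * C * eHSq (a + 2) (M (X L) - g) := fun N L => by
    have split := eHSq_sub_le (a + 2) (M (X N) - g) (M (X L) - g)
    rw [sub_sub_sub_cancel_right, ← h.isLinMap.sub] at split
    calc eHSq a (X N - X L) ≤ C * eHSq (a + 2) (M (X N - X L)) :=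
          lower _ ((X_smooth N a).sub (X_smooth L a))
      _ ≤ C * (2 * eHSq (a + 2) (M (X N) - g) + 2 * eHSq (a + 2) (M (X L) - g)) := by gcongr
      _ = _ := by ring
  obtain ⟨ξ, hξ, hlim⟩ := exists_tendsto_eHSq_sub (fun N => X_smooth N a)
    (tendsto_const_mul_nhds_zero (by finiteness) approx) cauchy
  refine ⟨ξ, hξ, ?_⟩
  have residual : ∀ N, eHSq (a + 2) (M ξ - g) ≤
      2 * eHSq (a + 2) (M (X N) - g) + 2 * C₁ * eHSq a (X N - ξ) := fun N => by
    have split := eHSq_sub_le (a + 2) (M (X N) - g) (M (X N - ξ))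
    rw [h.isLinMap.sub, sub_sub_sub_cancel_left, ← h.isLinMap.sub] at split
    refine split.trans ?_
    rw [mul_assoc 2 C₁]
    gcongr
    exact upper _ ((X_smooth N a).sub hξ)
  have limit := (tendsto_const_mul_nhds_zero (C := 2) (by finiteness) approx).add
    (tendsto_const_mul_nhds_zero (C := 2 * C₁) (by finiteness) hlim)
  rw [add_zero] at limit
  exact sub_eq_zero.1 (eHSq_eq_zero.1 (le_antisymm (ge_of_tendsto' limit residual) zero_le))

theorem eq_of_map_eq (h : IsCoercivePerturbation μ δ a M) {ξ' : Coef}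
    (hξ : MemH a ξ) (hξ' : MemH a ξ') (heq : M ξ = M ξ') : ξ = ξ' := by
  obtain ⟨C, -, lower⟩ := h.exists_eHSq_le_map
  have bound := lower _ (hξ.sub hξ')
  rw [h.isLinMap.sub, heq, sub_self, eHSq_eq_zero.2 rfl, mul_zero, nonpos_iff_eq_zero] at bound
  exact sub_eq_zero.1 (eHSq_eq_zero.1 bound)

theorem exists_mul_hN_le (h : IsCoercivePerturbation μ δ a M) :
    ∃ c : ℝ, 0 < c ∧ ∀ ξ, MemH a ξ → c * hN a ξ ≤ hN (a + 2) (M ξ) := by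
  obtain ⟨C, hC, lower⟩ := h.exists_eHSq_le_map
  lift C to NNReal using hC
  have hr : 0 < (C : ℝ) + 1 := by positivity
  have C_le : (C : ℝ≥0∞) ≤ ENNReal.ofReal ((C + 1 : ℝ) ^ 2) := by
    rw [← ENNReal.ofReal_coe_nnreal]
    exact ENNReal.ofReal_le_ofReal (by nlinarith [C.coe_nonneg])
  refine ⟨((C : ℝ) + 1)⁻¹, inv_pos.2 hr, fun ξ hξ => (inv_mul_le_iff₀ hr).2 ?_⟩
  rw [hN_le_mul_hN_iff hξ.2 (h.memH ξ hξ).2 hr.le]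
  exact (lower ξ hξ).trans (by gcongr)

end IsCoercivePerturbation

end Galerkin

/-! ### The information operator -/

lemma innerC_self (c : Coef) : innerC c c = (hSq 0 c : ℂ) := by
  simpa only [fracLap_zero] using innerC_fracLap_self 0 c

lemma IsPerturbedHeatSol.enorm_integral_innerC_self {ν T R : ℝ} {C₀ : ℝ≥0∞} {W N : ℝ → Coef}
    (h : IsPerturbedHeatSol ν T R C₀ W N) :
    ‖∫ t in Ioc 0 T, innerC (W t) (W t)‖ₑ = ∫⁻ t in Ioc 0 T, eHSq 0 (W t) := by
  have hmeas : AEMeasurable (fun t => eHSq 0 (W t)) (volume.restrict (Ioc 0 T)) :=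
    AEMeasurable.tsum fun k =>
      ((h.aestronglyMeasurable le_rfl le_rfl k).enorm.pow_const 2).const_mul _
  have hfin := ae_lt_top' hmeas h.lintegral_eHSq_zero_ne_top
  have hinner : ∫ t in Ioc 0 T, innerC (W t) (W t) =
      ∫ t in Ioc 0 T, ((eHSq 0 (W t)).toReal : ℂ) := by
    refine integral_congr_ae (hfin.mono fun t ht => ?_)
    simp only [innerC_self, eHSq_eq_ofReal (finH_iff.2 ht.ne),
      ENNReal.toReal_ofReal (hSq_nonneg _ _)]
  rw [hinner, integral_complex_ofReal, integral_toReal hmeas hfin, ← ofReal_norm,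
    Complex.norm_real, Real.norm_of_nonneg ENNReal.toReal_nonneg,
    ENNReal.ofReal_toReal h.lintegral_eHSq_zero_ne_top]

section Gramian

variable {ν T R δ a : ℝ} {C₀ : ℝ≥0∞} {I : Coef → ℝ → Coef} {N : Coef → ℝ → Coef}
  {M : Coef → Coef}

lemma exists_eHSq_neg_one_le_innerC (hν : 0 < ν) (hT : 0 < T) (hC₀ : C₀ ≠ ∞) (hR : 1 ≤ R)
    (hI : ∀ ξ, MemHinf ξ → I ξ 0 = ξ ∧ IsPerturbedHeatSol ν T R C₀ (I ξ) (N ξ))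
    (hM : ∀ ξ g, MemHinf ξ → MemHinf g → innerC (M ξ) g = ∫ t in Ioc 0 T, innerC (I ξ t) (I g t)) :
    ∃ C ≠ (∞ : ℝ≥0∞), ∀ ξ, MemHinf ξ → eHSq (-1) ξ ≤ C * ‖innerC (M ξ) ξ‖ₑ := by
  obtain ⟨C, hC, backward⟩ := exists_eHSq_init_le (σ := -1) hν hT hC₀ (by simpa using hR)
  refine ⟨C, hC, fun ξ hξ => ?_⟩
  obtain ⟨init, sol⟩ := hI ξ hξ
  rw [hM ξ ξ hξ hξ, sol.enorm_integral_innerC_self]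
  simpa only [init, neg_add_cancel] using backward _ _ sol

lemma exists_eHSq_remainder_gramian_le {s : ℝ} (hν : 0 < ν) (hT : 0 < T) (hC₀ : C₀ ≠ ∞)
    (hδ : δ ∈ Ioc 0 1) (hs : -1 ≤ s) (hsR : s + 2 + δ ≤ R)
    (hI : ∀ ξ, MemHinf ξ → I ξ 0 = ξ ∧ IsPerturbedHeatSol ν T R C₀ (I ξ) (N ξ))
    (hM : ∀ ξ g, MemHinf ξ → MemHinf g → innerC (M ξ) g = ∫ t in Ioc 0 T, innerC (I ξ t) (I g t))
    (hreal : ∀ ξ, MemHinf ξ → IsReal (M ξ)) :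
    ∃ C ≠ (∞ : ℝ≥0∞), ∀ ξ, MemHinf ξ →
      eHSq (s + 2 + δ) (remainder (2 * ν) M ξ) ≤ C * eHSq s ξ := by
  obtain ⟨hδ0, hδ1⟩ := hδ
  obtain ⟨C, hC, pairing⟩ := exists_enorm_innerC_sub_integral_le
    (s := s) (r := -(s + 2 + δ)) hν hT hC₀ (by linarith)
    (abs_le.2 ⟨by linarith, by linarith⟩) (abs_le.2 ⟨by linarith, by linarith⟩)
    (abs_le.2 ⟨by linarith, by linarith⟩) (abs_le.2 ⟨by linarith, by linarith⟩)
  refine exists_eHSq_remainder_le hreal hC fun ξ g hξ hg => ?_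
  obtain ⟨init_ξ, sol_ξ⟩ := hI ξ hξ
  obtain ⟨init_g, sol_g⟩ := hI g hg
  simpa only [init_ξ, init_g, hM ξ g hξ hg, Complex.ofReal_mul, Complex.ofReal_ofNat]
    using pairing _ _ _ _ sol_ξ sol_g

theorem isCoercivePerturbation_gramian (hν : 0 < ν) (hT : 0 < T) (hC₀ : C₀ ≠ ∞)
    (ha : -1 ≤ a) (hδ : δ ∈ Ioc 0 1)
    (hI : ∀ ξ, MemHinf ξ → I ξ 0 = ξ ∧ IsPerturbedHeatSol ν T (a + 2 + δ) C₀ (I ξ) (N ξ))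
    (hM : ∀ ξ g, MemHinf ξ → MemHinf g → innerC (M ξ) g = ∫ t in Ioc 0 T, innerC (I ξ t) (I g t))
    (hlin : IsLinMap M) (hmem : ∀ ξ, MemH a ξ → MemH (a + 2) (M ξ))
    (hbdd : ∃ C : ℝ, 0 < C ∧ ∀ ξ, MemH a ξ → hN (a + 2) (M ξ) ≤ C * hN a ξ) :
    IsCoercivePerturbation (2 * ν) δ a M where
  ne_zero := by positivity
  gain_pos := hδ.1
  neg_one_le := ha
  isLinMap := hlin
  memH := hmem
  bounded := by
    obtain ⟨C, hC, hle⟩ := hbdd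
    exact ⟨ENNReal.ofReal (C ^ 2), ENNReal.ofReal_ne_top, fun ξ hξ =>
      (hN_le_mul_hN_iff (hmem ξ hξ).2 hξ.2 hC.le).1 (hle ξ hξ)⟩
  coercive := exists_eHSq_neg_one_le_innerC hν hT hC₀ (by linarith [hδ.1]) hI hM
  remainder_le s hs := exists_eHSq_remainder_gramian_le hν hT hC₀ hδ hs.1 (by linarith [hs.2]) hI hM
    fun ξ hξ => (hmem ξ (hξ a)).1

end Gramian

theorem statement18_general (a s : ℝ) (ha : -1 ≤ a) (hs : a + 3 < s) (T ν : ℝ) (hT : 0 < T)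
    (hν : 0 < ν) (θ f : Coef) (hθ : FinH s θ) (hf : FinH (s - 1) f)
    (uθ : ℝ → Coef) (huθ : IsNSSol ν f T θ uθ)
    (I : Coef → ℝ → Coef)
    (hI : ∀ ξ, MemHinf ξ →
      IsLinSol ν uθ T ξ (I ξ) ∧ ContH 0 T (I ξ) ∧ MemL2H 1 T (I ξ))
    (M : Coef → Coef) (hMlin : IsLinMap M)
    (hMmap : ∀ ξ, MemH a ξ → MemH (a + 2) (M ξ))
    (hMbdd : ∃ C : ℝ, 0 < C ∧ ∀ ξ, MemH a ξ → hN (a + 2) (M ξ) ≤ C * hN a ξ)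
    (hMrep : ∀ ξ g, MemHinf ξ → MemHinf g →
      innerC (M ξ) g = ∫ t in (0 : ℝ)..T, innerC (I ξ t) (I g t)) :
    (∀ ξ ξ' : Coef, MemH a ξ → MemH a ξ' → M ξ = M ξ' → ξ = ξ') ∧
    (∀ g : Coef, MemH (a + 2) g → ∃ ξ, MemH a ξ ∧ M ξ = g) ∧
    (∃ c : ℝ, 0 < c ∧ ∀ ξ, MemH a ξ → c * hN a ξ ≤ hN (a + 2) (M ξ)) := by
  -- The Wiener bound at order `(a + 2 + δ) / 2` costs more than one derivative: `a + 3 + δ < s`.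
  obtain ⟨δ, hδ0, hδ⟩ : ∃ δ > 0, δ < min 1 (s - a - 3) :=
    exists_between (lt_min one_pos (by linarith))
  obtain ⟨hδ1, hδs⟩ := lt_min_iff.1 hδ
  have hs_eq : 2 * ((a + 2 + δ) / 2) + (s - (a + 2 + δ)) = s := by ring
  obtain ⟨K, hK, wiener_le⟩ := huθ.exists_wienerNorm_sq_le (p := (a + 2 + δ) / 2)
    (q := s - (a + 2 + δ)) hν hT.le (by linarith) (by linarith) (by rwa [hs_eq]) (by rwa [hs_eq])
  have pert : IsCoercivePerturbation (2 * ν) δ a M :=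
    isCoercivePerturbation_gramian (C₀ := 4 * K) hν hT (by finiteness) ha ⟨hδ0, hδ1.le⟩
      (fun ξ hξ => ⟨(hI ξ hξ).1.init, (hI ξ hξ).1.isPerturbedHeatSol (fun σ => (hξ σ).2)
        (hI ξ hξ).2.1 (hI ξ hξ).2.2 wiener_le⟩)
      (fun ξ g hξ hg => by rw [hMrep ξ g hξ hg, intervalIntegral.integral_of_le hT.le])
      hMlin hMmap hMbdd
  exact ⟨fun _ _ => pert.eq_of_map_eq, fun _ => pert.exists_map_eq, pert.exists_mul_hN_le⟩

end NS2D

namespace NS2D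

/-- Theorem `TheorInverseI`. Invertibility of the
information operator: for `a ∈ ℤ`, `a ≥ −1`, `b = max{a+4, |a|+1}`,
`θ ∈ Ḣ^b_⋄` and `f ∈ Ḣ^{b−1}_⋄`, the (extension of the) information operator
`M = 𝕀_θ*𝕀_θ` — a bounded linear operator `Ḣ^a_⋄ → Ḣ^{a+2}_⋄` characterised
on test fields by `⟨Mξ, g⟩_{L²} = ∫₀ᵀ ⟨𝕀_θ ξ(t), 𝕀_θ g(t)⟩_{L²} dt` — is a
homeomorphism between `Ḣ^a_⋄` and `Ḣ^{a+2}_⋄`: it is injective, surjective,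
and has a continuous inverse (equivalently, `Δ𝕀_θ*𝕀_θ` is a homeomorphism of
`Ḣ^a_⋄`). -/
theorem statement18 (a : ℤ) (ha : -1 ≤ a) (T ν : ℝ) (hT : 0 < T) (hν : 0 < ν)
    (θ f : Coef)
    (hθ : MemH ((max (a + 4) (|a| + 1) : ℤ) : ℝ) θ)
    (hf : MemH (((max (a + 4) (|a| + 1) : ℤ) : ℝ) - 1) f)
    (uθ : ℝ → Coef) (huθ : IsNSSol ν f T θ uθ)
    (I : Coef → ℝ → Coef)
    (hI : ∀ ξ, MemHinf ξ →
      IsLinSol ν uθ T ξ (I ξ) ∧ ContH 0 T (I ξ) ∧ MemL2H 1 T (I ξ))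
    (M : Coef → Coef) (hMlin : IsLinMap M)
    (hMmap : ∀ ξ, MemH (a : ℝ) ξ → MemH ((a : ℝ) + 2) (M ξ))
    (hMbdd : ∃ C : ℝ, 0 < C ∧ ∀ ξ, MemH (a : ℝ) ξ →
      hN ((a : ℝ) + 2) (M ξ) ≤ C * hN (a : ℝ) ξ)
    (hMrep : ∀ ξ g, MemHinf ξ → MemHinf g →
      innerC (M ξ) g = ∫ t in (0:ℝ)..T, innerC (I ξ t) (I g t)) :
    (∀ ξ ξ' : Coef, MemH (a : ℝ) ξ → MemH (a : ℝ) ξ' → M ξ = M ξ' → ξ = ξ') ∧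
    (∀ g : Coef, MemH ((a : ℝ) + 2) g → ∃ ξ, MemH (a : ℝ) ξ ∧ M ξ = g) ∧
    (∃ c : ℝ, 0 < c ∧ ∀ ξ, MemH (a : ℝ) ξ →
      c * hN (a : ℝ) ξ ≤ hN ((a : ℝ) + 2) (M ξ)) := by
  have hb : max (a + 4) (|a| + 1) = a + 4 := by grind
  rw [hb] at hθ hf
  push_cast at hθ hf
  exact statement18_general a (a + 4) (by exact_mod_cast ha) (by linarith) T ν hT hν θ f hθ.2 hf.2
    uθ huθ I hI M hMlin hMmap hMbdd hMrep

end NS2D
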